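/- Let K and L be convex bodies in ℝ³, both centrally symmetric about the origin O, with L contained in the interior of K and L strictly convex. Suppose that for every point z on the boundary of K the graze Σ(L,z) is contained in a plane Δ_z, and that K is almost free with respect to L. Then for every x ∈ bd K, the set Ω_x := S(L,x) ∩ S(L,−x) is homothetic to the graze Σ(L,x) with centre of homothety at x: there exists λ > 0 such that Ω_x = {x + λ(p − x) : p ∈ Σ(L,x)}. -/

import Mathlib

open Metric Set

noncomputable section

/-- The ambient space ℝ³. -/
abbrev E3 := EuclideanSpace ℝ (Fin 3)

/-- The cone generated by `L` with apex `x`: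
`C(L,x) = {x + λ (y - x) : y ∈ L, λ ≥ 0}`. -/
def coneGen (L : Set E3) (x : E3) : Set E3 :=
  {p | ∃ y ∈ L, ∃ l : ℝ, 0 ≤ l ∧ p = x + l • (y - x)}

/-- The support cone `S(L,x)` of `L` from `x`, the boundary of `C(L,x)`. -/
def suppCone (L : Set E3) (x : E3) : Set E3 := frontier (coneGen L x)

/-- The graze `Σ(L,x) = S(L,x) ∩ bd L`. -/
def graze (L : Set E3) (x : E3) : Set E3 := suppCone L x ∩ frontier L

/-- An affine subspace of `ℝ³` is a plane if its direction is 2-dimensional. -/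
def IsPlane (P : AffineSubspace ℝ E3) : Prop :=
  Module.finrank ℝ P.direction = 2

/-- The line through two points. -/
def lineThrough (a b : E3) : Set E3 := ↑(affineSpan ℝ ({a, b} : Set E3))

/-- `K` is almost free with respect to `L` (given the planes `Δ z` containing the
grazes `Σ(L,z)` for `z ∈ bd K`): for every `z ∈ bd K` and every
`w ∈ Π_z ∩ bd K`, where `Π_z` is the plane through the origin parallel to `Δ z`,
the line through `z` and `w` does not meet `L`. -/
def AlmostFree (K L : Set E3) (Δ : E3 → AffineSubspace ℝ E3) : Prop :=
  ∀ z ∈ frontier K, ∀ w ∈ (↑(Δ z).direction : Set E3) ∩ frontier K,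
    Disjoint (lineThrough z w) L

/-! Fix `x ∈ bd K`, and let `π` be the functional with `π x = 1` such that the graze of `L` from `x`
is cut out by `π = a`, where `a < 1`. It suffices that the central section `{π = 0}` of `C(L, x)`
is symmetric about `O`: since `S(L, -x) = -S(L, x)`, the points of `Ω_x` then satisfy `π = 0`, and
the ratio of the homothety is `(1 - a)⁻¹`.

For the symmetry in a given direction of `{π = 0}`, take `w ∈ bd K` in that direction and restrict
to the plane through `O`, `x` and `w`. A line of this plane that misses `L` lies on two support
planes of `L`; the gap between them is a chord length of a planar section of the polar body.
Because the grazes are planar, moving the boundary point from `x` towards `w` carries weighted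
pencils of tangent lines along with constant gap. Two quarter turns lead to `-x`, and the central
symmetry turns this into a scaling invariance of the gap on a pencil. In almost every direction the
chord length is of exact order `√ε` at the edge, because a monotone function is differentiable
almost everywhere; there the invariance forces the gap to be `C √(α β)`. By almost freeness the
lines joining `x` to `w` and to `-w` miss `L`, so they belong to the pencils of both `x` and `w`.
Comparing supergradients of the gap at them shows that the two tangents from `x` have opposite
slopes, which is the symmetry in this direction. Almost every direction is dense, so the symmetry
holds in all of them. -/

section Subgradient

open Filter Topology MeasureTheory

/-- `μ` selects a subgradient of `H` at every point of the line; in particular `H` is convex. -/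
def IsSubgradient (H μ : ℝ → ℝ) : Prop := ∀ s t, H s + μ s * (t - s) ≤ H t

namespace IsSubgradient

variable {H μ : ℝ → ℝ} {t R : ℝ}

lemma monotone (h : IsSubgradient H μ) : Monotone μ := by
  intro s t hst
  rcases hst.eq_or_lt with rfl | hlt
  · rfl
  · nlinarith [h s t, h t s]

lemma convexOn (h : IsSubgradient H μ) : ConvexOn ℝ univ H := by
  refine ⟨convex_univ, fun s _ t _ a b ha hb hab => ?_⟩
  simp only [smul_eq_mul]
  set u := a * s + b * t
  calc H u = a * (H u + μ u * (s - u)) + b * (H u + μ u * (t - u)) := by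
        linear_combination (-H u + μ u * u) * hab
    _ ≤ a * H s + b * H t := by gcongr <;> exact h u _

lemma continuous (h : IsSubgradient H μ) : Continuous H :=
  h.convexOn.locallyLipschitz.continuous

lemma hasDerivAt (h : IsSubgradient H μ) (hμ : ContinuousAt μ t) : HasDerivAt H (μ t) t := by
  rw [hasDerivAt_iff_isLittleO, Asymptotics.isLittleO_iff]
  intro ε hε
  filter_upwards [Metric.continuousAt_iff'.1 hμ ε hε] with s hs
  have hlow : 0 ≤ H s - H t - (s - t) * μ t := by linarith [h t s]
  have hup : H s - H t - (s - t) * μ t ≤ (μ s - μ t) * (s - t) := by linarith [h s t]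
  rw [smul_eq_mul, Real.norm_of_nonneg hlow]
  calc _ ≤ |μ s - μ t| * |s - t| := hup.trans ((le_abs_self _).trans_eq (abs_mul _ _))
    _ ≤ ε * |s - t| := by gcongr; exact hs.le

lemma integral_eq_sub (h : IsSubgradient H μ) (a b : ℝ) : ∫ s in a..b, μ s = H b - H a :=
  integral_eq_of_hasDerivAt_off_countable H μ h.monotone.countable_not_continuousAt
    h.continuous.continuousOn (fun _ hs => h.hasDerivAt (not_not.1 hs.2))
    h.monotone.intervalIntegrable

lemma taylor_remainder (h : IsSubgradient H μ) (s : ℝ) :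
    ∫ u in t..s, (μ u - μ t - (u - t) * R) =
      H s - H t - μ t * (s - t) - R / 2 * (s - t) ^ 2 := by
  have hμ : IntervalIntegrable μ volume t s := h.monotone.intervalIntegrable
  have hid : IntervalIntegrable (fun u => u - t) volume t s :=
    (continuous_sub_right t).intervalIntegrable t s
  rw [intervalIntegral.integral_sub (hμ.sub intervalIntegrable_const) (hid.mul_const R),
    intervalIntegral.integral_sub hμ intervalIntegrable_const, h.integral_eq_sub,
    intervalIntegral.integral_mul_const, intervalIntegral.integral_sub
      (continuous_id'.intervalIntegrable t s) intervalIntegrable_const,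
    intervalIntegral.integral_const, intervalIntegral.integral_const, integral_id]
  simp only [smul_eq_mul]
  ring

lemma taylor_isLittleO (h : IsSubgradient H μ) (hμ : HasDerivAt μ R t) :
    (fun s => H s - H t - μ t * (s - t) - R / 2 * (s - t) ^ 2) =o[𝓝 t] fun s => (s - t) ^ 2 := by
  rw [Asymptotics.isLittleO_iff]
  intro η hη
  obtain ⟨δ, hδ, hsmall⟩ := Metric.eventually_nhds_iff_ball.1
    (Asymptotics.isLittleO_iff.1 (hasDerivAt_iff_isLittleO.1 hμ) hη)
  filter_upwards [Metric.ball_mem_nhds t hδ] with s hs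
  rw [← h.taylor_remainder, norm_pow, sq, ← mul_assoc]
  refine intervalIntegral.norm_integral_le_of_norm_le_const fun u hu => ?_
  have hus : |u - t| ≤ |s - t| := abs_sub_left_of_mem_uIcc (uIoc_subset_uIcc hu)
  calc ‖μ u - μ t - (u - t) * R‖ ≤ η * ‖u - t‖ := hsmall u (hus.trans_lt hs)
    _ ≤ η * ‖s - t‖ := by gcongr; exact hus

lemma tendsto_taylor (h : IsSubgradient H μ) (hμ : HasDerivAt μ R t) :
    Tendsto (fun k => (H (t + k) - H t - μ t * k) / k ^ 2) (𝓝[≠] 0) (𝓝 (R / 2)) := by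
  have hshift : Tendsto (fun k : ℝ => t + k) (𝓝[≠] 0) (𝓝 t) :=
    ((continuous_const_add t).tendsto' 0 t (add_zero t)).mono_left nhdsWithin_le_nhds
  have hrem :=
    ((h.taylor_isLittleO hμ).comp_tendsto hshift).tendsto_div_nhds_zero.add_const (R / 2)
  rw [zero_add] at hrem
  refine hrem.congr' ?_
  filter_upwards [self_mem_nhdsWithin] with k (hk : k ≠ 0)
  simp only [Function.comp_apply, add_sub_cancel_left]
  field_simp
  ring

lemma tendsto_second_difference (h : IsSubgradient H μ) (hμ : HasDerivAt μ R t) :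
    Tendsto (fun k => (H (t + k) - 2 * H t + H (t - k)) / k ^ 2) (𝓝[≠] 0) (𝓝 R) := by
  have hneg : Tendsto (fun k : ℝ => -k) (𝓝[≠] 0) (𝓝[≠] 0) := by
    refine tendsto_nhdsWithin_iff.2 ⟨?_, ?_⟩
    · exact (continuous_neg.tendsto' 0 0 neg_zero).mono_left nhdsWithin_le_nhds
    · filter_upwards [self_mem_nhdsWithin] with k hk using neg_ne_zero.2 hk
  have hsum := (h.tendsto_taylor hμ).add ((h.tendsto_taylor hμ).comp hneg)
  rw [add_halves] at hsum
  refine hsum.congr fun k => ?_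
  simp only [Function.comp_apply, neg_sq, ← sub_eq_add_neg]
  ring

lemma tendsto_tangent_gap (h : IsSubgradient H μ) (hμ : HasDerivAt μ R t) :
    Tendsto (fun k => (H t - (H (t + k) - k * μ (t + k))) / k ^ 2) (𝓝[≠] 0) (𝓝 (R / 2)) := by
  have hslope := hasDerivAt_iff_tendsto_slope_zero.1 hμ
  have hdiff := hslope.sub (h.tendsto_taylor hμ)
  rw [sub_half] at hdiff
  refine hdiff.congr' ?_
  filter_upwards [self_mem_nhdsWithin] with k (hk : k ≠ 0)
  rw [smul_eq_mul]
  field_simp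
  ring

end IsSubgradient

end Subgradient

section ChordLength

open Filter Topology MeasureTheory

/-- The length, measured by the second coordinate, of the chord cut from the planar set `Z` by the
line `z.1 + t * z.2 = l`; it is `0` when this line misses `Z`. -/
def chordLength (Z : Set (ℝ × ℝ)) (t l : ℝ) : ℝ :=
  sSup {w | ∃ z ∈ Z, ∃ z' ∈ Z, z.1 + t * z.2 = l ∧ z'.1 + t * z'.2 = l ∧ w = z.2 - z'.2}

/-- The highest level of the linear form `z.1 + t * z.2` on the planar set `Z`. -/
def topLevel (Z : Set (ℝ × ℝ)) (t : ℝ) : ℝ := sSup ((fun z => z.1 + t * z.2) '' Z)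

/-- `m t` is a point of `Z` at which `z.1 + t * z.2` is maximal. -/
def IsSupportMap (Z : Set (ℝ × ℝ)) (m : ℝ → ℝ × ℝ) : Prop :=
  ∀ t, m t ∈ Z ∧ ∀ z ∈ Z, z.1 + t * z.2 ≤ (m t).1 + t * (m t).2

variable {Z : Set (ℝ × ℝ)} {m : ℝ → ℝ × ℝ} {t R ε d h M : ℝ}

lemma exists_isSupportMap (hZ : IsCompact Z) (hne : Z.Nonempty) : ∃ m, IsSupportMap Z m := by
  choose m hm hmax using fun t : ℝ =>
    hZ.exists_isMaxOn hne (f := fun z : ℝ × ℝ => z.1 + t * z.2) (by fun_prop)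
  exact ⟨m, fun t => ⟨hm t, fun _ hz => hmax t hz⟩⟩

lemma tendsto_mul_sqrt_nhdsNE {k : ℝ} (hk : k ≠ 0) :
    Tendsto (fun ε => k * √ε) (𝓝[>] 0) (𝓝[≠] 0) := by
  refine tendsto_nhdsWithin_iff.2 ⟨?_, ?_⟩
  · have hcont : Continuous fun ε => k * √ε := by fun_prop
    exact (hcont.tendsto' 0 0 (by simp)).mono_left nhdsWithin_le_nhds
  · filter_upwards [self_mem_nhdsWithin] with ε hε
    exact mul_ne_zero hk (Real.sqrt_ne_zero'.2 hε)

lemma chordLength_nonneg (Z : Set (ℝ × ℝ)) (t l : ℝ) : 0 ≤ chordLength Z t l := by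
  by_cases hl : ∃ z ∈ Z, z.1 + t * z.2 = l
  · obtain ⟨z, hz, hzl⟩ := hl
    exact Real.sSup_nonneg' ⟨0, ⟨z, hz, z, hz, hzl, hzl, (sub_self _).symm⟩, le_rfl⟩
  · exact Real.sSup_nonneg fun _ ⟨z, hz, _, _, hzl, _⟩ => (hl ⟨z, hz, hzl⟩).elim

lemma sub_le_chordLength (hM : ∀ z ∈ Z, ∀ z' ∈ Z, z.2 - z'.2 ≤ M) {l : ℝ} {z z' : ℝ × ℝ}
    (hz : z ∈ Z) (hz' : z' ∈ Z) (hl : z.1 + t * z.2 = l) (hl' : z'.1 + t * z'.2 = l) :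
    z.2 - z'.2 ≤ chordLength Z t l := by
  refine le_csSup ⟨M, ?_⟩ ⟨z, hz, z', hz', hl, hl', rfl⟩
  rintro _ ⟨y, hy, y', hy', -, -, rfl⟩
  exact hM y hy y' hy'

/-- Moving a point of depth at most `ε` to depth exactly `ε`, along the segment towards a point of
depth `d`, shifts it by `O(ε)`. -/
lemma exists_mem_level_near (hconv : Convex ℝ Z) (hM : ∀ z ∈ Z, ∀ z' ∈ Z, z.2 - z'.2 ≤ M)
    {y z : ℝ × ℝ} {l : ℝ} (hy : y ∈ Z) (hyl : y.1 + t * y.2 = l - d) (hε : 2 * ε < d)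
    (hz : z ∈ Z) (hzl : z.1 + t * z.2 ≤ l) (hzε : l - ε ≤ z.1 + t * z.2) :
    ∃ q ∈ Z, q.1 + t * q.2 = l - ε ∧ |q.2 - z.2| ≤ 2 * M / d * ε := by
  set δ := l - (z.1 + t * z.2) with hδ
  have hden : 0 < d - δ := by linarith
  set c := (ε - δ) / (d - δ) with hc
  have hc0 : 0 ≤ c := div_nonneg (by linarith) hden.le
  have hc1 : c ≤ 1 := by rw [hc, div_le_one hden]; linarith
  have hcε : c ≤ 2 * ε / d := by
    rw [hc, div_le_div_iff₀ hden (by linarith)]; nlinarith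
  have hceq : c * (d - δ) = ε - δ := div_mul_cancel₀ _ hden.ne'
  have hyz : |y.2 - z.2| ≤ M := abs_le.2 ⟨by linarith [hM z hz y hy], hM y hy z hz⟩
  refine ⟨(1 - c) • z + c • y, hconv hz hy (by linarith) hc0 (by ring), ?_, ?_⟩ <;>
    simp only [Prod.fst_add, Prod.snd_add, Prod.smul_fst, Prod.smul_snd, smul_eq_mul]
  · linear_combination -hceq + c * hyl + (c - 1) * hδ
  · calc |(1 - c) * z.2 + c * y.2 - z.2| = c * |y.2 - z.2| := by
          rw [← abs_of_nonneg hc0, ← abs_mul, abs_of_nonneg hc0]; ring_nf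
      _ ≤ 2 * ε / d * M := mul_le_mul hcε hyz (abs_nonneg _) (hc0.trans hcε)
      _ = 2 * M / d * ε := by ring

namespace IsSupportMap

lemma isSubgradient (hm : IsSupportMap Z m) :
    IsSubgradient (fun t => (m t).1 + t * (m t).2) (fun t => (m t).2) := fun s t => by
  linarith [(hm t).2 (m s) (hm s).1]

lemma topLevel_eq (hm : IsSupportMap Z m) (t : ℝ) : topLevel Z t = (m t).1 + t * (m t).2 :=
  IsGreatest.csSup_eq ⟨mem_image_of_mem _ (hm t).1, forall_mem_image.2 (hm t).2⟩

lemma mul_chordLength_le (hm : IsSupportMap Z m) (hε : 0 ≤ ε) (hh : 0 < h) :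
    h * chordLength Z t (topLevel Z t - ε) ≤
      2 * ε + (topLevel Z (t + h) - 2 * topLevel Z t + topLevel Z (t - h)) := by
  simp only [hm.topLevel_eq]
  rw [← le_div_iff₀' hh]
  refine Real.sSup_le ?_ (div_nonneg ?_ hh.le)
  · rintro _ ⟨z, hz, z', hz', hl, hl', rfl⟩
    rw [le_div_iff₀' hh]
    linarith [(hm (t + h)).2 z hz, (hm (t - h)).2 z' hz']
  · linarith [(hm (t + h)).2 _ (hm t).1, (hm (t - h)).2 _ (hm t).1]

lemma sub_le_chordLength (hm : IsSupportMap Z m) (hconv : Convex ℝ Z)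
    (hM : ∀ z ∈ Z, ∀ z' ∈ Z, z.2 - z'.2 ≤ M) {y : ℝ × ℝ} (hy : y ∈ Z)
    (hyd : y.1 + t * y.2 = topLevel Z t - d) (hε : 2 * ε < d) {s s' : ℝ}
    (hs : topLevel Z t - ε ≤ (m s).1 + t * (m s).2)
    (hs' : topLevel Z t - ε ≤ (m s').1 + t * (m s').2) :
    (m s).2 - (m s').2 - 4 * M / d * ε ≤ chordLength Z t (topLevel Z t - ε) := by
  have hle (r : ℝ) : (m r).1 + t * (m r).2 ≤ topLevel Z t :=
    (hm.topLevel_eq t).symm ▸ (hm t).2 _ (hm r).1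
  obtain ⟨q, hq, hql, hqs⟩ := exists_mem_level_near hconv hM hy hyd hε (hm s).1 (hle s) hs
  obtain ⟨q', hq', hql', hqs'⟩ := exists_mem_level_near hconv hM hy hyd hε (hm s').1 (hle s') hs'
  have hchord := _root_.sub_le_chordLength hM hq hq' hql hql'
  linarith [(abs_le.1 hqs).1, (abs_le.1 hqs').2, (by ring : 4 * M / d * ε = 2 * (2 * M / d * ε))]

lemma eventually_chordLength_div_sqrt_lt (hm : IsSupportMap Z m)
    (hR : HasDerivAt (fun t => (m t).2) R t) {a : ℝ} (ha0 : 0 < a) (ha : 8 * R < a ^ 2) :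
    ∀ᶠ ε in 𝓝[>] 0, chordLength Z t (topLevel Z t - ε) / √ε < a := by
  have hk : 0 < 4 / a := by positivity
  have hstep : Tendsto (fun ε => 4 / a * √ε) (𝓝[>] 0) (𝓝[≠] 0) := tendsto_mul_sqrt_nhdsNE hk.ne'
  have hsecond := (hm.isSubgradient.tendsto_second_difference hR).comp hstep
  have hlim : a / 2 + 4 / a * R < a := by
    rw [div_mul_eq_mul_div, div_add_div _ _ two_ne_zero ha0.ne', div_lt_iff₀ (by positivity)]
    linarith
  filter_upwards [((hsecond.const_mul (4 / a)).const_add (a / 2)).eventually_lt_const hlim,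
    self_mem_nhdsWithin] with ε hε (hε0 : 0 < ε)
  have hσ : 0 < √ε := Real.sqrt_pos.2 hε0
  refine lt_of_le_of_lt ?_ hε
  have hbound := hm.mul_chordLength_le (t := t) hε0.le (mul_pos hk hσ)
  simp only [hm.topLevel_eq, Function.comp_apply] at hbound ⊢
  rw [div_le_iff₀ hσ, ← mul_le_mul_iff_right₀ (mul_pos hk hσ)]
  refine hbound.trans_eq ?_
  field_simp
  rw [Real.sq_sqrt hε0.le]
  ring

lemma eventually_topLevel_sub_le (hm : IsSupportMap Z m) (hR : HasDerivAt (fun t => (m t).2) R t)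
    {k : ℝ} (hk : k ≠ 0) (hkR : k ^ 2 * (R / 2) < 1) :
    ∀ᶠ ε in 𝓝[>] 0, topLevel Z t - ε ≤ (m (t + k * √ε)).1 + t * (m (t + k * √ε)).2 := by
  have hgap := ((hm.isSubgradient.tendsto_tangent_gap hR).comp
    (tendsto_mul_sqrt_nhdsNE hk)).const_mul (k ^ 2)
  filter_upwards [hgap.eventually_lt_const hkR, self_mem_nhdsWithin] with ε hε (hε0 : 0 < ε)
  simp only [Function.comp_apply, mul_pow, Real.sq_sqrt hε0.le] at hε
  rw [mul_div_assoc', mul_div_mul_left _ _ (by positivity), div_lt_one hε0] at hε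
  rw [hm.topLevel_eq]
  linarith

lemma eventually_lt_chordLength_div_sqrt (hm : IsSupportMap Z m) (hconv : Convex ℝ Z)
    (hM : ∀ z ∈ Z, ∀ z' ∈ Z, z.2 - z'.2 ≤ M) (hd : 0 < d) {y : ℝ × ℝ} (hy : y ∈ Z)
    (hyd : y.1 + t * y.2 = topLevel Z t - d) (hR : HasDerivAt (fun t => (m t).2) R t)
    {a k : ℝ} (hk : 0 < k) (hkR : k ^ 2 * (R / 2) < 1) (ha : a < 2 * k * R) :
    ∀ᶠ ε in 𝓝[>] 0, a < chordLength Z t (topLevel Z t - ε) / √ε := by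
  have hslope {l : ℝ} (hl : l ≠ 0) :
      Tendsto (fun ε => ((m (t + l * √ε)).2 - (m t).2) / √ε) (𝓝[>] 0) (𝓝 (l * R)) := by
    refine (((hasDerivAt_iff_tendsto_slope_zero.1 hR).comp
      (tendsto_mul_sqrt_nhdsNE hl)).const_mul l).congr fun ε => ?_
    simp only [Function.comp_apply, smul_eq_mul, mul_inv]
    field_simp
  have hsqrt : Tendsto (fun ε => 4 * M / d * √ε) (𝓝[>] 0) (𝓝 0) := by
    have hcont : Continuous fun ε => 4 * M / d * √ε := by fun_prop
    exact (hcont.tendsto' 0 0 (by simp)).mono_left nhdsWithin_le_nhds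
  have hlow := ((hslope hk.ne').sub (hslope (neg_ne_zero.2 hk.ne'))).sub hsqrt
  filter_upwards [hlow.eventually_const_lt (by linarith : a < k * R - -k * R - 0),
    hm.eventually_topLevel_sub_le hR hk.ne' hkR,
    hm.eventually_topLevel_sub_le hR (neg_ne_zero.2 hk.ne') (by rwa [neg_sq]),
    Ioo_mem_nhdsGT (half_pos hd)] with ε hε hright hleft hεd
  have hchord := hm.sub_le_chordLength hconv hM hy hyd (by linarith [hεd.2]) hright hleft
  refine hε.trans_le ?_
  rw [le_div_iff₀ (Real.sqrt_pos.2 hεd.1)]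
  refine le_trans (le_of_eq ?_) hchord
  have hσ : √ε ≠ 0 := (Real.sqrt_pos.2 hεd.1).ne'
  field_simp
  rw [Real.sq_sqrt hεd.1.le]
  ring

lemma tendsto_chordLength_div_sqrt (hm : IsSupportMap Z m) (hconv : Convex ℝ Z)
    (hM : ∀ z ∈ Z, ∀ z' ∈ Z, z.2 - z'.2 ≤ M) (hd : 0 < d) {y : ℝ × ℝ} (hy : y ∈ Z)
    (hyd : y.1 + t * y.2 = topLevel Z t - d) (hR : HasDerivAt (fun t => (m t).2) R t) :
    Tendsto (fun ε => chordLength Z t (topLevel Z t - ε) / √ε) (𝓝[>] 0) (𝓝 √(8 * R)) := by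
  refine tendsto_order.2 ⟨fun a ha => ?_, fun a ha => ?_⟩
  · rcases lt_or_ge a 0 with ha0 | ha0
    · exact .of_forall fun ε =>
        ha0.trans_le (div_nonneg (chordLength_nonneg _ _ _) (Real.sqrt_nonneg _))
    · obtain ⟨a', haa', ha'⟩ := exists_between ha
      have ha'R : a' ^ 2 < 8 * R := (Real.lt_sqrt (ha0.trans haa'.le)).1 ha'
      have hR0 : 0 < R := by nlinarith [sq_nonneg a']
      refine hm.eventually_lt_chordLength_div_sqrt hconv hM hd hy hyd hR (k := a' / (2 * R))
        (div_pos (ha0.trans_lt haa') (by positivity)) ?_ (haa'.trans_eq (by field_simp))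
      rw [div_pow, div_mul_div_comm, div_lt_one (by positivity)]
      nlinarith
  · have ha0 : 0 < a := (Real.sqrt_nonneg _).trans_lt ha
    exact hm.eventually_chordLength_div_sqrt_lt hR ha0 ((Real.sqrt_lt' ha0).1 ha)

end IsSupportMap

/-- `HasSqrtChord Z t`: the chords of `Z` at depth `ε` below the top level in direction `t` have
length asymptotic to a constant multiple of `√ε`. -/
def HasSqrtChord (Z : Set (ℝ × ℝ)) (t : ℝ) : Prop :=
  ∃ c, Tendsto (fun ε => chordLength Z t (topLevel Z t - ε) / √ε) (𝓝[>] 0) (𝓝 c)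

/-- The top points depend monotonically on `t`, hence differentiably for almost every `t`. -/
theorem ae_hasSqrtChord (hZ : IsCompact Z) (hconv : Convex ℝ Z) : ∀ᵐ t, HasSqrtChord Z t := by
  rcases Z.eq_empty_or_nonempty with rfl | hne
  · exact .of_forall fun t => ⟨0, by simp [chordLength]⟩
  obtain ⟨m, hm⟩ := exists_isSupportMap hZ hne
  obtain ⟨B, hB⟩ := hZ.exists_bound_of_continuousOn continuous_snd.continuousOn
  have hM (z) (hz : z ∈ Z) (z') (hz' : z' ∈ Z) : z.2 - z'.2 ≤ B + B := by
    linarith [(abs_le.1 (hB z hz)).2, (abs_le.1 (hB z' hz')).1]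
  filter_upwards [hm.isSubgradient.monotone.ae_differentiableAt] with t ht
  by_cases hdeep : ∃ y ∈ Z, y.1 + t * y.2 < topLevel Z t
  · obtain ⟨y, hy, hlt⟩ := hdeep
    exact ⟨_, hm.tendsto_chordLength_div_sqrt hconv hM (sub_pos.2 hlt) hy (by ring) ht.hasDerivAt⟩
  · refine ⟨0, tendsto_const_nhds.congr' ?_⟩
    filter_upwards [self_mem_nhdsWithin] with ε (hε : 0 < ε)
    have hempty : {w | ∃ z ∈ Z, ∃ z' ∈ Z, z.1 + t * z.2 = topLevel Z t - ε ∧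
        z'.1 + t * z'.2 = topLevel Z t - ε ∧ w = z.2 - z'.2} = ∅ :=
      Set.eq_empty_of_forall_notMem fun w ⟨z, hz, _, _, hzl, _⟩ =>
        hdeep ⟨z, hz, by rw [hzl]; linarith⟩
    rw [chordLength, hempty, Real.sSup_empty, zero_div]

end ChordLength

section MaxSlope

open Filter Topology

variable {E : Type*} [NormedAddCommGroup E] [NormedSpace ℝ E] {P : Set E} {a c : E →L[ℝ] ℝ}
  {e s k : ℝ} {p : E}

/-- The largest slope `s` for which the half-space `a + s c ≤ e` contains `P`. For `e = 1` this is
the end of the chord that the line `a + ℝ c` cuts out of the polar of `P`. -/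
def maxSlope (P : Set E) (a c : E →L[ℝ] ℝ) (e : ℝ) : ℝ := sSup {s | ∀ q ∈ P, a q + s * c q ≤ e}

/-- The half-space `a + s c ≤ e` contains `P` and touches it at the point `p`, where `c` is
positive; so `s` is the largest slope, and `p` is the point that stops it from increasing. -/
structure IsContact (P : Set E) (a c : E →L[ℝ] ℝ) (e s : ℝ) (p : E) : Prop where
  mem : p ∈ P
  le : ∀ q ∈ P, a q + s * c q ≤ e
  eq : a p + s * c p = e
  pos : 0 < c p

lemma IsContact.isGreatest (h : IsContact P a c e s p) :
    IsGreatest {s | ∀ q ∈ P, a q + s * c q ≤ e} s :=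
  ⟨h.le, fun r hr => by nlinarith [hr p h.mem, h.eq, h.pos]⟩

lemma IsContact.maxSlope_eq (h : IsContact P a c e s p) : maxSlope P a c e = s :=
  h.isGreatest.csSup_eq

lemma IsContact.add_smul (h : IsContact P a c e s p) (k : ℝ) :
    IsContact P (a + k • c) c e (s - k) p where
  mem := h.mem
  le q hq := by
    simp only [add_apply, smul_apply, smul_eq_mul]
    linarith [h.le q hq]
  eq := by
    simp only [add_apply, smul_apply, smul_eq_mul]
    linarith [h.eq]
  pos := h.pos

lemma exists_mem_eq_zero_of_pos_of_neg (hP : Convex ℝ P) {p q : E} (hp : p ∈ P) (hq : q ∈ P)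
    (hcp : 0 < c p) (hcq : c q < 0) :
    ∃ m ∈ P, c m = 0 ∧ ∀ f : E →L[ℝ] ℝ, f p * -c q + f q * c p = f m * (c p - c q) := by
  have hd : 0 < c p - c q := by linarith
  refine ⟨(c p / (c p - c q)) • q + (-c q / (c p - c q)) • p,
    hP hq hp (div_nonneg hcp.le hd.le) (div_nonneg (by linarith) hd.le)
      (by rw [← add_div, ← sub_eq_add_neg, div_self hd.ne']), ?_, fun f => ?_⟩ <;>
  · simp only [map_add, map_smul, smul_eq_mul]
    field_simp
    ring

lemma exists_forall_add_mul_le (hP : Convex ℝ P) (h0 : ∀ p ∈ P, c p = 0 → a p ≤ e)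
    (hpos : ∃ p ∈ P, 0 < c p) (hneg : ∃ p ∈ P, c p < 0) : ∃ s, ∀ p ∈ P, a p + s * c p ≤ e := by
  have key : ∀ p ∈ P, ∀ q ∈ P, 0 < c p → c q < 0 → (e - a q) / c q ≤ (e - a p) / c p := by
    intro p hp q hq hcp hcq
    obtain ⟨m, hm, hcm, hf⟩ := exists_mem_eq_zero_of_pos_of_neg hP hp hq hcp hcq
    rw [div_le_iff_of_neg hcq, div_mul_eq_mul_div, div_le_iff₀ hcp]
    nlinarith [hf a, h0 m hm hcm]
  obtain ⟨p₀, hp₀, hcp₀⟩ := hpos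
  obtain ⟨q₀, hq₀, hcq₀⟩ := hneg
  set S : Set ℝ := (fun p => (e - a p) / c p) '' {p ∈ P | 0 < c p}
  have hne : S.Nonempty := ⟨_, p₀, ⟨hp₀, hcp₀⟩, rfl⟩
  have hle : ∀ q ∈ P, c q < 0 → ∀ r ∈ S, (e - a q) / c q ≤ r := by
    rintro q hq hcq - ⟨p, ⟨hp, hcp⟩, rfl⟩
    exact key p hp q hq hcp hcq
  refine ⟨sInf S, fun p hp => ?_⟩
  rcases lt_trichotomy (c p) 0 with h | h | h
  · linarith [(div_le_iff_of_neg h).1 (le_csInf hne (hle p hp h))]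
  · simpa [h] using h0 p hp h
  · linarith [(le_div_iff₀ h).1 (csInf_le ⟨_, hle q₀ hq₀ hcq₀⟩ ⟨p, ⟨hp, h⟩, rfl⟩)]

lemma exists_lt_forall_add_mul_le (hP : IsCompact P) (hle : ∀ q ∈ P, a q + s * c q ≤ e)
    (hlt : ∀ q ∈ P, 0 ≤ c q → a q + s * c q < e) (hpos : ∃ p ∈ P, 0 < c p) :
    ∃ r > s, ∀ q ∈ P, a q + r * c q ≤ e := by
  obtain ⟨p₀, hp₀, hcp₀⟩ := hpos
  have hP' : IsCompact (P ∩ {q | 0 ≤ c q}) :=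
    hP.inter_right (isClosed_le (by fun_prop) (by fun_prop))
  obtain ⟨q₁, hq₁, hmax⟩ := hP'.exists_isMaxOn ⟨p₀, hp₀, hcp₀.le⟩
    (f := fun q => a q + s * c q) (by fun_prop)
  obtain ⟨C, hC⟩ := hP'.exists_bound_of_continuousOn (f := fun q => c q) (by fun_prop)
  have hC0 : 0 < C + 1 := by linarith [(norm_nonneg _).trans (hC q₁ hq₁)]
  have hgap : 0 < (e - (a q₁ + s * c q₁)) / (C + 1) :=
    div_pos (by linarith [hlt q₁ hq₁.1 hq₁.2]) hC0
  set r := (e - (a q₁ + s * c q₁)) / (C + 1) with hr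
  refine ⟨s + r, by linarith, fun q hq => ?_⟩
  rcases lt_or_ge (c q) 0 with h | h
  · nlinarith [hle q hq]
  · have h₁ : a q + s * c q ≤ a q₁ + s * c q₁ := hmax ⟨hq, h⟩
    have h₂ : c q ≤ C := (le_abs_self _).trans (hC q ⟨hq, h⟩)
    have h₃ : r * (C + 1) = e - (a q₁ + s * c q₁) := by rw [hr]; field_simp
    nlinarith

lemma exists_isContact (hP : IsCompact P) (hconv : Convex ℝ P) (h0 : ∀ p ∈ P, c p = 0 → a p < e)
    (hpos : ∃ p ∈ P, 0 < c p) (hneg : ∃ p ∈ P, c p < 0) :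
    ∃ p, IsContact P a c e (maxSlope P a c e) p := by
  have hne := exists_forall_add_mul_le hconv (fun p hp h => (h0 p hp h).le) hpos hneg
  have hbdd : BddAbove {s | ∀ q ∈ P, a q + s * c q ≤ e} := by
    obtain ⟨p₀, hp₀, hcp₀⟩ := hpos
    refine ⟨(e - a p₀) / c p₀, fun s hs => ?_⟩
    rw [le_div_iff₀ hcp₀]
    linarith [hs p₀ hp₀]
  have hcl : IsClosed {s | ∀ q ∈ P, a q + s * c q ≤ e} := by
    simp only [ofPred_forall]
    exact isClosed_biInter fun q _ => isClosed_le (by fun_prop) (by fun_prop)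
  have hle : ∀ q ∈ P, a q + maxSlope P a c e * c q ≤ e := hcl.csSup_mem hne hbdd
  by_contra! hcon
  have hlt : ∀ q ∈ P, 0 ≤ c q → a q + maxSlope P a c e * c q < e := by
    refine fun q hq hcq => (hle q hq).lt_of_ne fun h => ?_
    rcases hcq.eq_or_lt with h' | h'
    · exact (h0 q hq h'.symm).ne (by simpa [← h'] using h)
    · exact hcon q ⟨hq, hle, h, h'⟩
  obtain ⟨r, hr, hrle⟩ := exists_lt_forall_add_mul_le hP hle hlt hpos
  exact (le_csSup hbdd hrle).not_gt hr

section Family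

variable {a c : ℝ → E →L[ℝ] ℝ} {e s : ℝ → ℝ} {p : ℝ → E} {t₀ : ℝ}

lemma tendsto_clm_apply {ι : Type*} {l : Filter ι} {f : ι → E →L[ℝ] ℝ} {q : ι → E} {f₀ : E →L[ℝ] ℝ}
    {q₀ : E} (hf : Tendsto f l (𝓝 f₀)) (hq : Tendsto q l (𝓝 q₀)) :
    Tendsto (fun i => f i (q i)) l (𝓝 (f₀ q₀)) :=
  (isBoundedBilinearMap_apply.continuous.tendsto (f₀, q₀)).comp (hf.prodMk_nhds hq)

lemma exists_eventually_mem_Icc_of_isContact (hs : ∀ t, IsContact P (a t) (c t) (e t) (s t) (p t))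
    (hneg : ∃ q ∈ P, c t₀ q < 0) (ha : ContinuousAt a t₀) (hc : ContinuousAt c t₀)
    (he : ContinuousAt e t₀) : ∃ A B, ∀ᶠ t in 𝓝 t₀, s t ∈ Icc A B := by
  obtain ⟨q, hq, hcq⟩ := hneg
  have hquot : ∀ q, c t₀ q ≠ 0 → ContinuousAt (fun t => (e t - a t q) / c t q) t₀ := fun q h =>
    (he.sub (ha.clm_apply continuousAt_const)).div (hc.clm_apply continuousAt_const) h
  have hval : ∀ q, ContinuousAt (fun t => c t q) t₀ := fun q => hc.clm_apply continuousAt_const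
  have hp := (hs t₀).pos
  refine ⟨(e t₀ - a t₀ q) / c t₀ q - 1, (e t₀ - a t₀ (p t₀)) / c t₀ (p t₀) + 1, ?_⟩
  filter_upwards [(hquot q hcq.ne).eventually_const_lt (sub_one_lt _),
    (hval q).eventually_lt_const hcq, (hquot _ hp.ne').eventually_lt_const (lt_add_one _),
    (hval (p t₀)).eventually_const_lt hp] with t h₁ h₂ h₃ h₄
  constructor
  · refine h₁.le.trans ?_
    rw [div_le_iff_of_neg h₂]
    linarith [(hs t).le q hq]
  · refine le_trans ?_ h₃.le
    rw [le_div_iff₀ h₄]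
    linarith [(hs t).le _ (hs t₀).mem]

lemma IsContact.eq_of_le_of_eq {a c : E →L[ℝ] ℝ} {e s s' : ℝ} {p p' : E}
    (h : IsContact P a c e s p) (huniq : ∀ q ∈ P, a q + s * c q = e → q = p) (hp' : p' ∈ P)
    (hle : ∀ q ∈ P, a q + s' * c q ≤ e) (heq : a p' + s' * c p' = e) (hc : 0 ≤ c p') :
    s' = s ∧ p' = p := by
  have hs : s' ≤ s := by nlinarith [hle p h.mem, h.eq, h.pos]
  have hp : p' = p := huniq p' hp' (le_antisymm (h.le p' hp') (by nlinarith))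
  subst hp
  exact ⟨by nlinarith [h.eq, h.pos], rfl⟩

lemma continuousAt_of_isContact (hP : IsCompact P)
    (hs : ∀ t, IsContact P (a t) (c t) (e t) (s t) (p t))
    (huniq : ∀ q ∈ P, a t₀ q + s t₀ * c t₀ q = e t₀ → q = p t₀)
    (hneg : ∃ q ∈ P, c t₀ q < 0) (ha : ContinuousAt a t₀) (hc : ContinuousAt c t₀)
    (he : ContinuousAt e t₀) : ContinuousAt (fun t => (s t, p t)) t₀ := by
  obtain ⟨A, B, hAB⟩ := exists_eventually_mem_Icc_of_isContact hs hneg ha hc he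
  refine (isCompact_Icc.prod hP).tendsto_nhds_of_unique_mapClusterPt
    (hAB.mono fun t ht => ⟨ht, (hs t).mem⟩) ?_
  rintro ⟨s', p'⟩ ⟨-, hp'⟩ hcl
  obtain ⟨U, hU, hUt⟩ := mapClusterPt_iff_ultrafilter.1 hcl
  have hsU : Tendsto s U (𝓝 s') := (continuous_fst.tendsto _).comp hUt
  have hpU : Tendsto p U (𝓝 p') := (continuous_snd.tendsto _).comp hUt
  have haU := ha.tendsto.mono_left hU
  have hcU := hc.tendsto.mono_left hU
  have heU := he.tendsto.mono_left hU
  have hle : ∀ q ∈ P, a t₀ q + s' * c t₀ q ≤ e t₀ := fun q hq =>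
    le_of_tendsto_of_tendsto' ((tendsto_clm_apply haU tendsto_const_nhds).add
      (hsU.mul (tendsto_clm_apply hcU tendsto_const_nhds))) heU fun t => (hs t).le q hq
  have heq : a t₀ p' + s' * c t₀ p' = e t₀ := tendsto_nhds_unique
    (((tendsto_clm_apply haU hpU).add (hsU.mul (tendsto_clm_apply hcU hpU))).congr
      fun t => (hs t).eq) heU
  have hc0 : 0 ≤ c t₀ p' := ge_of_tendsto' (tendsto_clm_apply hcU hpU) fun t => (hs t).pos.le
  obtain ⟨h₁, h₂⟩ := (hs t₀).eq_of_le_of_eq huniq hp' hle heq hc0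
  exact Prod.ext h₁ h₂

lemma hasDerivWithinAt_of_isContact (hs : ∀ t, IsContact P (a t) (c t) (e t) (s t) (p t))
    (hp : ContinuousAt p t₀) {a' c' : E →L[ℝ] ℝ} {e' : ℝ}
    (ha : HasDerivWithinAt a a' (Ici t₀) t₀) (hc : HasDerivWithinAt c c' (Ici t₀) t₀)
    (he : HasDerivWithinAt e e' (Ici t₀) t₀) :
    HasDerivWithinAt s ((e' - a' (p t₀) - s t₀ * c' (p t₀)) / c t₀ (p t₀)) (Ici t₀) t₀ := by
  have hcc : Tendsto c (𝓝[>] t₀) (𝓝 (c t₀)) :=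
    hc.continuousWithinAt.tendsto.mono_left (nhdsWithin_mono _ Ioi_subset_Ici_self)
  have hpc : Tendsto p (𝓝[>] t₀) (𝓝 (p t₀)) := hp.tendsto.mono_left nhdsWithin_le_nhds
  rw [← hasDerivWithinAt_Ioi_iff_Ici, hasDerivWithinAt_iff_tendsto_slope' self_notMem_Ioi] at *
  have hlim : ∀ q : ℝ → E, Tendsto q (𝓝[>] t₀) (𝓝 (p t₀)) →
      Tendsto (fun t => (slope e t₀ t - slope a t₀ t (q t) - s t₀ * slope c t₀ t (q t)) / c t (q t))
        (𝓝[>] t₀) (𝓝 ((e' - a' (p t₀) - s t₀ * c' (p t₀)) / c t₀ (p t₀))) := fun q hq =>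
    ((he.sub (tendsto_clm_apply ha hq)).sub ((tendsto_clm_apply hc hq).const_mul _)).div
      (tendsto_clm_apply hcc hq) (hs t₀).pos.ne'
  -- The half-space at one of the times `t`, `t₀`, tested at the contact point of the other,
  -- bounds the difference quotient from below and from above respectively.
  refine tendsto_of_tendsto_of_tendsto_of_le_of_le' (hlim p hpc)
    (hlim (fun _ => p t₀) tendsto_const_nhds) ?_ ?_
  · filter_upwards [self_mem_nhdsWithin] with t ht
    have hinv : 0 ≤ (t - t₀)⁻¹ := inv_nonneg.2 (sub_pos.2 ht).le
    rw [div_le_iff₀ (hs t).pos]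
    simp only [slope, vsub_eq_sub, smul_apply, sub_apply, smul_eq_mul]
    have := mul_nonneg hinv (sub_nonneg.2 ((hs t₀).le _ (hs t).mem))
    linear_combination this - (t - t₀)⁻¹ * (hs t).eq
  · filter_upwards [self_mem_nhdsWithin,
      (tendsto_clm_apply hcc (tendsto_const_nhds (x := p t₀))).eventually_const_lt (hs t₀).pos]
      with t ht hct
    have hinv : 0 ≤ (t - t₀)⁻¹ := inv_nonneg.2 (sub_pos.2 ht).le
    rw [le_div_iff₀ hct]
    simp only [slope, vsub_eq_sub, smul_apply, sub_apply, smul_eq_mul]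
    have := mul_nonneg hinv (sub_nonneg.2 ((hs t).le _ (hs t₀).mem))
    linear_combination this - (t - t₀)⁻¹ * (hs t₀).eq

end Family

end MaxSlope

section RightDerivative

open Filter Topology MeasureTheory intervalIntegral

variable {H μ ρ : ℝ → ℝ} {t : ℝ}

lemma hasDerivWithinAt_derivWithin_Ioi (hH : ConvexOn ℝ univ H) (t : ℝ) :
    HasDerivWithinAt H (derivWithin H (Ioi t) t) (Ici t) t :=
  hasDerivWithinAt_Ioi_iff_Ici.1 (hH.hasDerivWithinAt_rightDeriv_of_mem_interior (by simp))

lemma isSubgradient_derivWithin_Ioi (hH : ConvexOn ℝ univ H) :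
    IsSubgradient H fun t => derivWithin H (Ioi t) t := by
  intro t s
  rcases lt_trichotomy t s with h | rfl | h
  · have := hH.rightDeriv_le_slope_of_mem_interior (x := t) (y := s) (by simp) (by simp) h
    rw [slope_def_field, le_div_iff₀ (by linarith)] at this
    linarith
  · simp
  · have := (hH.slope_le_leftDeriv_of_mem_interior (x := s) (y := t) (by simp) (by simp) h).trans
      (hH.leftDeriv_le_rightDeriv_of_mem_interior (by simp))
    rw [slope_def_field, div_le_iff₀ (by linarith)] at this
    linarith

lemma IsSubgradient.continuousWithinAt_Ici (h : IsSubgradient H μ)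
    (hd : HasDerivWithinAt H (μ t) (Ici t) t) : ContinuousWithinAt μ (Ici t) t := by
  rw [← continuousWithinAt_Ioi_iff_Ici]
  refine tendsto_order.2 ⟨fun a ha => ?_, fun a ha => ?_⟩
  · filter_upwards [self_mem_nhdsWithin] with s hs using ha.trans_le (h.monotone (le_of_lt hs))
  rw [← hasDerivWithinAt_Ioi_iff_Ici, hasDerivWithinAt_iff_tendsto_slope' self_notMem_Ioi] at hd
  obtain ⟨s, hslope, hts : t < s⟩ := ((hd.eventually_lt_const ha).and self_mem_nhdsWithin).exists
  -- `μ x` is at most the slope of `H` between `x` and `s`, which is continuous in `x`.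
  have hcont : ContinuousAt (fun x => (H s - H x) / (s - x)) t :=
    (continuousAt_const.sub h.continuous.continuousAt).div (by fun_prop) (by linarith)
  have hlt : ∀ᶠ x in 𝓝 t, (H s - H x) / (s - x) < a :=
    hcont.eventually_lt_const (by simpa [slope_def_field] using hslope)
  filter_upwards [hlt.filter_mono nhdsWithin_le_nhds, Ioo_mem_nhdsGT hts] with x hx hxs
  refine lt_of_le_of_lt ?_ hx
  rw [le_div_iff₀ (by linarith [hxs.2])]
  linarith [h x s]

/-- The solution `exp (-∫₀ᵗ ρ)` of `ω' = -ρ ω`, `ω 0 = 1`. -/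
def expDecay (ρ : ℝ → ℝ) (t : ℝ) : ℝ := Real.exp (-∫ x in (0 : ℝ)..t, ρ x)

lemma expDecay_pos (ρ : ℝ → ℝ) (t : ℝ) : 0 < expDecay ρ t := Real.exp_pos _

lemma expDecay_zero (ρ : ℝ → ℝ) : expDecay ρ 0 = 1 := by simp [expDecay]

lemma continuous_expDecay (hρ : ∀ a b, IntervalIntegrable ρ volume a b) :
    Continuous (expDecay ρ) :=
  Real.continuous_exp.comp (continuous_primitive hρ 0).neg

lemma hasDerivWithinAt_expDecay (hρ : ∀ a b, IntervalIntegrable ρ volume a b) (hm : Measurable ρ)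
    (hc : ContinuousWithinAt ρ (Ici t) t) :
    HasDerivWithinAt (expDecay ρ) (-(expDecay ρ t * ρ t)) (Ici t) t :=
  ((integral_hasDerivWithinAt_right (hρ 0 t) (t := Ioi t)
    hm.stronglyMeasurable.stronglyMeasurableAtFilter
    (hc.mono Ioi_subset_Ici_self)).neg.exp).congr_deriv (mul_neg _ _)

lemma expDecay_le_one (hpos : ∀ t, 0 ≤ ρ t) : expDecay ρ 1 ≤ 1 :=
  Real.exp_le_one_iff.2 (neg_nonpos.2 (integral_nonneg zero_le_one fun u _ => hpos u))

lemma one_le_expDecay (hneg : ∀ t, ρ t ≤ 0) : 1 ≤ expDecay ρ 1 := by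
  refine Real.one_le_exp ?_
  rw [← intervalIntegral.integral_neg]
  exact integral_nonneg zero_le_one fun u _ => neg_nonneg.2 (hneg u)

lemma expDecay_lt_one (hρ : ∀ a b, IntervalIntegrable ρ volume a b)
    (hc : ContinuousWithinAt ρ (Ici 0) 0) (hpos : ∀ t, 0 ≤ ρ t) (h0 : 0 < ρ 0) :
    expDecay ρ 1 < 1 := by
  have hev : ∀ᶠ t in 𝓝[>] (0 : ℝ), ρ 0 / 2 < ρ t :=
    (hc.mono Ioi_subset_Ici_self).eventually_const_lt (by linarith)
  obtain ⟨δ, hδ : 0 < δ, hδρ⟩ := mem_nhdsGT_iff_exists_Ioo_subset.1 hev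
  have hκ : 0 < min δ 1 := lt_min hδ one_pos
  have hfst : min δ 1 * (ρ 0 / 2) ≤ ∫ x in (0 : ℝ)..min δ 1, ρ x := by
    have := integral_mono_on_of_le_Ioo (f := fun _ => ρ 0 / 2) (g := ρ) hκ.le (by simp) (hρ _ _)
      fun x hx => le_of_lt (hδρ ⟨hx.1, hx.2.trans_le (min_le_left _ _)⟩)
    simpa only [intervalIntegral.integral_const, sub_zero, smul_eq_mul] using this
  have hsnd : 0 ≤ ∫ x in min δ 1..1, ρ x :=
    integral_nonneg (min_le_right _ _) fun u _ => hpos u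
  rw [expDecay, Real.exp_lt_one_iff, neg_lt_zero,
    ← integral_add_adjacent_intervals (hρ 0 (min δ 1)) (hρ _ 1)]
  nlinarith [mul_pos hκ h0]

end RightDerivative

section Grazes

variable {E : Type*} [NormedAddCommGroup E] [NormedSpace ℝ E] {L : Set E} {f : E →L[ℝ] ℝ} {e : ℝ}

lemma eq_of_strictConvex_of_forall_le (hL : StrictConvex ℝ L) (hf : f ≠ 0) (hle : ∀ q ∈ L, f q ≤ e)
    {p q : E} (hp : p ∈ L) (hq : q ∈ L) (hfp : f p = e) (hfq : f q = e) : p = q := by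
  by_contra hne
  have hmid : (1 / 2 : ℝ) • p + (1 / 2 : ℝ) • q ∈ interior L :=
    hL hp hq hne (by norm_num) (by norm_num) (by norm_num)
  have hmax : IsLocalMax f ((1 / 2 : ℝ) • p + (1 / 2 : ℝ) • q) := by
    filter_upwards [mem_interior_iff_mem_nhds.1 hmid] with v hv
    simp only [map_add, map_smul, smul_eq_mul, hfp, hfq]
    linarith [hle v hv]
  exact hf (hmax.hasFDerivAt_eq_zero f.hasFDerivAt)

/-- `y z = b + 1`, and the plane `y = b` contains the graze of `L` from `z`, described as the set of
the points where the support planes of `L` through `z` touch `L`. -/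
structure IsGrazePlane (L : Set E) (z : E) (y : E →L[ℝ] ℝ) (b : ℝ) : Prop where
  apply_apex : y z = b + 1
  apply_eq : ∀ p ∈ L, ∀ f : E →L[ℝ] ℝ, f ≠ 0 → (∀ q ∈ L, f q ≤ f z) → f p = f z → y p = b

/-- `L` is a strictly convex body, symmetric about the origin, in the open unit ball of the norm
`N`, and its graze from every point of the unit sphere of `N` is planar. -/
structure IsGrazed (L : Set E) (N : Seminorm ℝ E) : Prop where
  isCompact : IsCompact L
  strictConvex : StrictConvex ℝ L
  neg_mem : ∀ q ∈ L, -q ∈ L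
  zero_mem_interior : (0 : E) ∈ interior L
  norm_pos : ∀ z ≠ 0, 0 < N z
  norm_lt_one : ∀ q ∈ L, N q < 1
  exists_isGrazePlane : ∀ z, N z = 1 → ∃ y b, IsGrazePlane L z y b

lemma exists_pos_smul_mem (hL : (0 : E) ∈ interior L) (v : E) : ∃ ε > (0 : ℝ), ε • v ∈ L := by
  have hcont : Filter.Tendsto (fun ε : ℝ => ε • v) (nhds 0) (nhds 0) :=
    (by fun_prop : Continuous fun ε : ℝ => ε • v).tendsto' 0 0 (zero_smul ℝ v)
  have hev := (hcont.eventually (mem_interior_iff_mem_nhds.1 hL)).filter_mono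
    (nhdsWithin_le_nhds (s := Ioi 0))
  obtain ⟨ε, hε, hpos⟩ := (hev.and self_mem_nhdsWithin).exists
  exact ⟨ε, hpos, hε⟩

end Grazes

/-- A coordinate system of a three-dimensional space: the vectors `u₁, u₂, u₃` form a basis and
`p₁, p₂, p₃` are the coordinates in it. Sections are taken in the plane `p₃ = 0`. -/
structure CoordFrame (E : Type*) [NormedAddCommGroup E] [NormedSpace ℝ E] where
  (p₁ p₂ p₃ : E →L[ℝ] ℝ)
  (u₁ u₂ u₃ : E)
  p₁_u₁ : p₁ u₁ = 1
  p₁_u₂ : p₁ u₂ = 0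
  p₁_u₃ : p₁ u₃ = 0
  p₂_u₁ : p₂ u₁ = 0
  p₂_u₂ : p₂ u₂ = 1
  p₂_u₃ : p₂ u₃ = 0
  p₃_u₁ : p₃ u₁ = 0
  p₃_u₂ : p₃ u₂ = 0
  p₃_u₃ : p₃ u₃ = 1
  expand : ∀ q, q = p₁ q • u₁ + p₂ q • u₂ + p₃ q • u₃

namespace CoordFrame

attribute [simp] p₁_u₁ p₁_u₂ p₁_u₃ p₂_u₁ p₂_u₂ p₂_u₃ p₃_u₁ p₃_u₂ p₃_u₃

variable {E : Type*} [NormedAddCommGroup E] [NormedSpace ℝ E] {L : Set E} {N : Seminorm ℝ E}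
  {y : E →L[ℝ] ℝ} {b σ γ : ℝ} {q : E} (F : CoordFrame E)

lemma apply_eq (f : E →L[ℝ] ℝ) (q : E) :
    f q = F.p₁ q * f F.u₁ + F.p₂ q * f F.u₂ + F.p₃ q * f F.u₃ := by
  conv_lhs => rw [F.expand q]
  simp only [map_add, map_smul, smul_eq_mul]

/-- The frame rotated by a quarter turn in the plane `p₃ = 0`. -/
def rot : CoordFrame E where
  p₁ := F.p₂
  p₂ := -F.p₁
  p₃ := F.p₃
  u₁ := F.u₂
  u₂ := -F.u₁
  u₃ := F.u₃
  p₁_u₁ := by simp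
  p₁_u₂ := by simp
  p₁_u₃ := by simp
  p₂_u₁ := by simp
  p₂_u₂ := by simp
  p₂_u₃ := by simp
  p₃_u₁ := by simp
  p₃_u₂ := by simp
  p₃_u₃ := by simp
  expand q := by
    conv_lhs => rw [F.expand q]
    simp only [neg_apply]
    module

/-- The frame whose first vector has moved along the segment from `u₁` (`t = 0`) to `u₂` (`t = 1`)
and whose second vector is the direction `u₂ - u₁` of that segment. -/
def turn (t : ℝ) : CoordFrame E where
  p₁ := F.p₁ + F.p₂
  p₂ := (-t) • F.p₁ + (1 - t) • F.p₂
  p₃ := F.p₃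
  u₁ := (1 - t) • F.u₁ + t • F.u₂
  u₂ := F.u₂ - F.u₁
  u₃ := F.u₃
  p₁_u₁ := by simp
  p₁_u₂ := by simp
  p₁_u₃ := by simp
  p₂_u₁ := by simp; ring
  p₂_u₂ := by simp
  p₂_u₃ := by simp
  p₃_u₁ := by simp
  p₃_u₂ := by simp
  p₃_u₃ := by simp
  expand q := by
    conv_lhs => rw [F.expand q]
    simp only [add_apply, smul_apply, smul_eq_mul]
    module

/-- The section of `L` by the plane `p₃ = 0`. -/
def slice (L : Set E) : Set E := {q ∈ L | F.p₃ q = 0}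

lemma isCompact_slice (hL : IsCompact L) : IsCompact (F.slice L) :=
  hL.inter_right (isClosed_eq (by fun_prop) (by fun_prop))

lemma convex_slice (hL : Convex ℝ L) : Convex ℝ (F.slice L) := by
  intro q hq q' hq' a b ha hb hab
  exact ⟨hL hq.1 hq'.1 ha hb hab, by simp [hq.2, hq'.2]⟩

lemma apply_eq_of_mem_slice (hq : q ∈ F.slice L) (f : E →L[ℝ] ℝ) :
    f q = F.p₁ q * f F.u₁ + F.p₂ q * f F.u₂ := by
  simp [F.apply_eq f q, hq.2]

end CoordFrame

namespace IsGrazed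

variable {E : Type*} [NormedAddCommGroup E] [NormedSpace ℝ E] {L : Set E} {N : Seminorm ℝ E}
  {f y : E →L[ℝ] ℝ} {e b : ℝ} {p q z : E} (F : CoordFrame E)

lemma convex (H : IsGrazed L N) : Convex ℝ L := H.strictConvex.convex

lemma neg_mem_slice (H : IsGrazed L N) (hq : q ∈ F.slice L) : -q ∈ F.slice L :=
  ⟨H.neg_mem q hq.1, by simp [hq.2]⟩

lemma exists_mem_slice_pos (H : IsGrazed L N) (hz : F.p₃ z = 0) (hf : 0 < f z) :
    ∃ q ∈ F.slice L, 0 < f q := by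
  obtain ⟨ε, hε, hmem⟩ := exists_pos_smul_mem H.zero_mem_interior z
  exact ⟨ε • z, ⟨hmem, by simp [hz]⟩, by simpa using mul_pos hε hf⟩

lemma exists_mem_pos (H : IsGrazed L N) (hf : 0 < f z) : ∃ q ∈ L, 0 < f q := by
  obtain ⟨ε, hε, hmem⟩ := exists_pos_smul_mem H.zero_mem_interior z
  exact ⟨ε • z, hmem, by simpa using mul_pos hε hf⟩

lemma exists_mem_neg (H : IsGrazed L N) (hf : 0 < f z) : ∃ q ∈ L, f q < 0 := by
  obtain ⟨q, hq, hpos⟩ := H.exists_mem_pos hf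
  exact ⟨-q, H.neg_mem q hq, by simpa using hpos⟩

lemma exists_extension (H : IsGrazed L N) (hf : f F.u₁ ≠ 0) (hle : ∀ q ∈ F.slice L, f q ≤ e) :
    ∃ g : E →L[ℝ] ℝ, g ≠ 0 ∧ (∀ q ∈ L, g q ≤ e) ∧ ∀ q, F.p₃ q = 0 → g q = f q := by
  have hu₃ : 0 < F.p₃ F.u₃ := by simp
  obtain ⟨s, hs⟩ := exists_forall_add_mul_le H.convex (fun q hq h => hle q ⟨hq, h⟩)
    (H.exists_mem_pos hu₃) (H.exists_mem_neg hu₃)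
  refine ⟨f + s • F.p₃, fun h => hf ?_, fun q hq => by simpa using hs q hq,
    fun q hq => by simp [hq]⟩
  simpa using DFunLike.congr_fun h F.u₁

lemma eq_of_mem_slice (H : IsGrazed L N) (hf : f F.u₁ ≠ 0) (hle : ∀ q ∈ F.slice L, f q ≤ e)
    (hp : p ∈ F.slice L) (hq : q ∈ F.slice L) (hfp : f p = e) (hfq : f q = e) : p = q := by
  obtain ⟨g, hg, hgle, hgf⟩ := H.exists_extension F hf hle
  exact eq_of_strictConvex_of_forall_le H.strictConvex hg hgle hp.1 hq.1 ((hgf p hp.2).trans hfp)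
    ((hgf q hq.2).trans hfq)

lemma apply_eq_of_mem_slice (H : IsGrazed L N) (hy : IsGrazePlane L z y b) (hz : F.p₃ z = 0)
    (hf : f F.u₁ ≠ 0) (hle : ∀ q ∈ F.slice L, f q ≤ f z) (hq : q ∈ F.slice L) (hfq : f q = f z) :
    y q = b := by
  obtain ⟨g, hg, hgle, hgf⟩ := H.exists_extension F hf hle
  refine hy.apply_eq q hq.1 g hg ?_ ?_ <;> simp only [hgf z hz, hgf q hq.2] <;> assumption

end IsGrazed

namespace CoordFrame

variable {E : Type*} [NormedAddCommGroup E] [NormedSpace ℝ E] {L : Set E} {N : Seminorm ℝ E}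
  {y : E →L[ℝ] ℝ} {b σ γ : ℝ} {q : E} (F : CoordFrame E)

/-- The line `N u₁ • p₁ + τ • p₂ = 1` in the plane `p₃ = 0` passes through the point of the ray of
`u₁` with `N = 1`; it supports the section of `L` for exactly two slopes `τ`, the larger of which
belongs to the sign `σ = 1` and the smaller to `σ = -1`. -/
def tangentSlope (L : Set E) (N : Seminorm ℝ E) (σ : ℝ) : ℝ :=
  σ * maxSlope (F.slice L) (N F.u₁ • F.p₁) (σ • F.p₂) 1

/-- The functional equal to `1` on the support line with slope `tangentSlope`. -/
def tangent (L : Set E) (N : Seminorm ℝ E) (σ : ℝ) : E →L[ℝ] ℝ :=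
  N F.u₁ • F.p₁ + F.tangentSlope L N σ • F.p₂

/-- `q` is the point where the support line with sign `σ` touches the section of `L`. -/
structure IsTangentPoint (L : Set E) (N : Seminorm ℝ E) (σ : ℝ) (q : E) : Prop where
  mem : q ∈ F.slice L
  tangent_le : ∀ p ∈ F.slice L, F.tangent L N σ p ≤ 1
  tangent_eq : F.tangent L N σ q = 1
  pos : 0 < σ * F.p₂ q

variable {F}

lemma _root_.IsGrazed.norm_u₁_pos (H : IsGrazed L N) (F : CoordFrame E) : 0 < N F.u₁ :=
  H.norm_pos _ fun h => by simpa [h] using F.p₁_u₁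

lemma tangent_u₁ (L : Set E) (N : Seminorm ℝ E) (σ : ℝ) :
    F.tangent L N σ F.u₁ = N F.u₁ := by
  simp [tangent]

lemma tangent_apply (q : E) :
    F.tangent L N σ q = N F.u₁ * F.p₁ q + F.tangentSlope L N σ * F.p₂ q := by
  simp [tangent]

lemma _root_.IsGrazed.exists_isTangentPoint (H : IsGrazed L N) (F : CoordFrame E)
    (hσ : σ * σ = 1) : ∃ q, F.IsTangentPoint L N σ q := by
  have hu₂ : 0 < (σ • F.p₂) (σ • F.u₂) := by simp [hσ]
  have hlt : ∀ q ∈ F.slice L, (σ • F.p₂) q = 0 → (N F.u₁ • F.p₁) q < 1 := by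
    intro q hq h0
    simp only [smul_apply, smul_eq_mul] at h0 ⊢
    have hp₂ : F.p₂ q = 0 := by linear_combination σ * h0 - F.p₂ q * hσ
    have hN := H.norm_lt_one q hq.1
    rw [F.expand q, hp₂, hq.2, zero_smul, zero_smul, add_zero, add_zero, map_smul_eq_mul] at hN
    linarith [mul_le_mul_of_nonneg_right (Real.le_norm_self (F.p₁ q)) (apply_nonneg N F.u₁)]
  obtain ⟨p, hp, hpos⟩ := H.exists_mem_slice_pos F (by simp) hu₂
  obtain ⟨q, hq⟩ := exists_isContact (F.isCompact_slice H.isCompact) (F.convex_slice H.convex) hlt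
    ⟨p, hp, hpos⟩ ⟨-p, H.neg_mem_slice F hp, by simpa using hpos⟩
  have hval : ∀ p, (N F.u₁ • F.p₁) p + maxSlope (F.slice L) (N F.u₁ • F.p₁) (σ • F.p₂) 1 *
      (σ • F.p₂) p = F.tangent L N σ p := fun p => by
    simp only [tangent_apply, tangentSlope, smul_apply, smul_eq_mul]
    ring
  exact ⟨q, hq.mem, fun p hp => (hval p).symm.trans_le (hq.le p hp), (hval q).symm.trans hq.eq,
    hq.pos⟩

namespace IsTangentPoint

lemma isContact (hq : F.IsTangentPoint L N σ q) (hσ : σ * σ = 1) :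
    IsContact (F.slice L) (N F.u₁ • F.p₁) (σ • F.p₂) 1 (σ * F.tangentSlope L N σ) q := by
  have hval : ∀ p, (N F.u₁ • F.p₁) p + σ * F.tangentSlope L N σ * (σ • F.p₂) p =
      F.tangent L N σ p := fun p => by
    simp only [tangent_apply, smul_apply, smul_eq_mul]
    linear_combination F.tangentSlope L N σ * F.p₂ p * hσ
  exact ⟨hq.mem, fun p hp => (hval p).trans_le (hq.tangent_le p hp), (hval q).trans hq.tangent_eq,
    hq.pos⟩

lemma eq_of_tangent_eq (hq : F.IsTangentPoint L N σ q) (H : IsGrazed L N) {p : E}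
    (hp : p ∈ F.slice L) (h : F.tangent L N σ p = 1) : p = q :=
  H.eq_of_mem_slice F (by rw [tangent_u₁]; exact (H.norm_u₁_pos F).ne') hq.tangent_le hp hq.mem h
    hq.tangent_eq

lemma p₂_mul_eq_one (hq : F.IsTangentPoint L N σ q) (H : IsGrazed L N)
    (hy : IsGrazePlane L ((N F.u₁)⁻¹ • F.u₁) y b) :
    F.p₂ q * ((1 + b) * F.tangentSlope L N σ - y F.u₂) = 1 := by
  have hN := (H.norm_u₁_pos F).ne'
  have hval : F.tangent L N σ ((N F.u₁)⁻¹ • F.u₁) = 1 := by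
    simp [tangent_u₁, hN]
  have hyq : y q = b := H.apply_eq_of_mem_slice F hy (by simp) ((tangent_u₁ L N σ).trans_ne hN)
    (by simpa only [hval] using hq.tangent_le) hq.mem (by rw [hval, hq.tangent_eq])
  have hyu₁ : y F.u₁ = (b + 1) * N F.u₁ := by
    have := hy.apply_apex
    rw [map_smul, smul_eq_mul] at this
    field_simp at this
    linarith
  have htan := hq.tangent_eq
  rw [tangent_apply] at htan
  rw [F.apply_eq_of_mem_slice hq.mem y, hyu₁] at hyq
  linear_combination (1 + b) * htan - hyq

/-- `N F.u₁ • F.p₁ + γ • F.p₂` supports the unit ball of `N`, hence is less than `1` on `L`. -/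
lemma norm_mul_add_lt_one (H : IsGrazed L N)
    (hγ : ∀ s : ℝ, N F.u₁ + γ * s ≤ N (F.u₁ + s • F.u₂)) (hq : q ∈ F.slice L) :
    N F.u₁ * F.p₁ q + γ * F.p₂ q < 1 := by
  obtain ⟨k, hk, hk₁⟩ : ∃ k > 0, k * F.p₁ q ≤ 1 :=
    ⟨(|F.p₁ q| + 1)⁻¹, by positivity, by
      rw [inv_mul_le_one₀ (by positivity)]; linarith [le_abs_self (F.p₁ q)]⟩
  have hsplit : F.u₁ + (k * F.p₂ q) • F.u₂ = (1 - k * F.p₁ q) • F.u₁ + k • q := by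
    have hexp := F.expand q
    rw [hq.2, zero_smul, add_zero] at hexp
    rw [show k • q = k • (F.p₁ q • F.u₁ + F.p₂ q • F.u₂) from congrArg (k • ·) hexp]
    module
  have hle := map_add_le_add N ((1 - k * F.p₁ q) • F.u₁) (k • q)
  rw [← hsplit, map_smul_eq_mul, map_smul_eq_mul, Real.norm_of_nonneg (by linarith),
    Real.norm_of_nonneg hk.le] at hle
  have hlt : k * N q < k * 1 := mul_lt_mul_of_pos_left (H.norm_lt_one q hq.1) hk
  refine lt_of_mul_lt_mul_left (a := k) ?_ hk.le
  linarith [hγ (k * F.p₂ q)]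

lemma sign_mul_sub_pos (hq : F.IsTangentPoint L N σ q) (H : IsGrazed L N) (hσ : σ * σ = 1)
    (hγ : ∀ s : ℝ, N F.u₁ + γ * s ≤ N (F.u₁ + s • F.u₂)) :
    0 < σ * (F.tangentSlope L N σ - γ) := by
  have hlt := norm_mul_add_lt_one H hγ hq.mem
  have htan := hq.tangent_eq
  rw [tangent_apply] at htan
  refine pos_of_mul_pos_left ?_ hq.pos.le
  have : σ * (F.tangentSlope L N σ - γ) * (σ * F.p₂ q) = (F.tangentSlope L N σ - γ) * F.p₂ q := by
    linear_combination (F.tangentSlope L N σ - γ) * F.p₂ q * hσ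
  rw [this]
  linarith

lemma level_eq {q₁ q₂ : E} (h₁ : F.IsTangentPoint L N 1 q₁) (h₂ : F.IsTangentPoint L N (-1) q₂)
    (H : IsGrazed L N) (hτ : F.tangentSlope L N (-1) < F.tangentSlope L N 1)
    (hy : IsGrazePlane L ((N F.u₁)⁻¹ • F.u₁) y b) :
    b = ((F.p₂ q₁)⁻¹ - (F.p₂ q₂)⁻¹) / (F.tangentSlope L N 1 - F.tangentSlope L N (-1)) - 1 := by
  rw [inv_eq_of_mul_eq_one_right (h₁.p₂_mul_eq_one H hy),
    inv_eq_of_mul_eq_one_right (h₂.p₂_mul_eq_one H hy), eq_sub_iff_add_eq,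
    eq_div_iff (sub_pos.2 hτ).ne']
  ring

end IsTangentPoint

lemma tangentSlope_lt (H : IsGrazed L N) (hγ : ∀ s : ℝ, N F.u₁ + γ * s ≤ N (F.u₁ + s • F.u₂)) :
    F.tangentSlope L N (-1) < F.tangentSlope L N 1 := by
  obtain ⟨q₁, h₁⟩ := H.exists_isTangentPoint F (σ := 1) (by norm_num)
  obtain ⟨q₂, h₂⟩ := H.exists_isTangentPoint F (σ := -1) (by norm_num)
  linarith [h₁.sign_mul_sub_pos H (by norm_num) hγ, h₂.sign_mul_sub_pos H (by norm_num) hγ]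

/-- The points opposite to the two touching points lie in `L`, below the other support line. -/
lemma level_nonneg (H : IsGrazed L N) (hτ : F.tangentSlope L N (-1) < F.tangentSlope L N 1)
    (hy : IsGrazePlane L ((N F.u₁)⁻¹ • F.u₁) y b) : 0 ≤ b := by
  obtain ⟨q₁, h₁⟩ := H.exists_isTangentPoint F (σ := 1) (by norm_num)
  obtain ⟨q₂, h₂⟩ := H.exists_isTangentPoint F (σ := -1) (by norm_num)
  have hle₁ := h₂.tangent_le _ (H.neg_mem_slice F h₁.mem)
  have hle₂ := h₁.tangent_le _ (H.neg_mem_slice F h₂.mem)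
  have heq₁ := h₁.tangent_eq
  have heq₂ := h₂.tangent_eq
  have hpos₁ := h₁.pos
  have hpos₂ := h₂.pos
  simp only [tangent_apply, map_neg] at hle₁ hle₂ heq₁ heq₂
  have hy₁ := h₁.p₂_mul_eq_one H hy
  have hy₂ := h₂.p₂_mul_eq_one H hy
  have hwidth₁ : F.tangentSlope L N 1 - F.tangentSlope L N (-1) ≤
      2 * ((1 + b) * F.tangentSlope L N 1 - y F.u₂) :=
    le_of_mul_le_mul_left (a := F.p₂ q₁) (by linarith) (by linarith)
  have hwidth₂ : F.tangentSlope L N 1 - F.tangentSlope L N (-1) ≤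
      -2 * ((1 + b) * F.tangentSlope L N (-1) - y F.u₂) :=
    le_of_mul_le_mul_left (a := -F.p₂ q₂) (by linarith) (by linarith)
  refine nonneg_of_mul_nonneg_left (b := F.tangentSlope L N 1 - F.tangentSlope L N (-1)) ?_
    (by linarith)
  linarith

lemma add_tangent_lt (H : IsGrazed L N) {α β : ℝ} (hα : 0 < α) (hβ : 0 < β)
    (hq : q ∈ F.slice L) : α * F.tangent L N 1 q + β * F.tangent L N (-1) q < α + β := by
  obtain ⟨q₁, h₁⟩ := H.exists_isTangentPoint F (σ := 1) (by norm_num)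
  obtain ⟨q₂, h₂⟩ := H.exists_isTangentPoint F (σ := -1) (by norm_num)
  rcases (h₁.tangent_le q hq).lt_or_eq with hlt | heq
  · linarith [mul_lt_mul_of_pos_left hlt hα, mul_le_mul_of_nonneg_left (h₂.tangent_le q hq) hβ.le]
  · have hlt : F.tangent L N (-1) q < 1 := by
      refine (h₂.tangent_le q hq).lt_of_ne fun heq' => ?_
      have hpos₁ := h₁.pos
      have hpos₂ := h₂.pos
      rw [← h₁.eq_of_tangent_eq H hq heq] at hpos₁
      rw [← h₂.eq_of_tangent_eq H hq heq'] at hpos₂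
      linarith
    rw [heq]
    linarith [mul_lt_mul_of_pos_left hlt hβ]

lemma tangent_congr (H : IsGrazed L N) (hσ : σ * σ = 1) {F' : CoordFrame E} {k : ℝ}
    (h₃ : F'.p₃ = F.p₃) (hu : F'.u₁ = F.u₁) (h₂ : F'.p₂ = F.p₂) (h₁ : F'.p₁ = F.p₁ + k • F.p₂) :
    F'.tangent L N σ = F.tangent L N σ := by
  obtain ⟨q, hq⟩ := H.exists_isTangentPoint F hσ
  have ha : N F.u₁ • F.p₁ + (k * N F.u₁ * σ) • σ • F.p₂ = N F'.u₁ • F'.p₁ := by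
    rw [hu, h₁, smul_smul, mul_assoc _ σ σ, hσ]
    module
  have hslope := ((hq.isContact hσ).add_smul (k * N F.u₁ * σ)).maxSlope_eq
  rw [ha] at hslope
  have hτ : F'.tangentSlope L N σ = F.tangentSlope L N σ - k * N F.u₁ := by
    rw [tangentSlope, h₂, show F'.slice L = F.slice L by rw [slice, slice, h₃], hslope]
    linear_combination (F.tangentSlope L N σ - k * N F.u₁) * hσ
  rw [tangent, tangent, hτ, hu, h₁, h₂]
  module

end CoordFrame

section Gap

variable {E : Type*} [NormedAddCommGroup E] [NormedSpace ℝ E]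

/-- The distance between the two slopes `s` for which the plane `n + s c = e` supports `L`; these
planes contain the line `n = e`, `c = 0`. -/
def gap (L : Set E) (c n : E →L[ℝ] ℝ) (e : ℝ) : ℝ := maxSlope L n c e + maxSlope L n (-c) e

lemma IsContact.eq_of_strictConvex {L : Set E} {a c : E →L[ℝ] ℝ} {e s : ℝ} {p q : E}
    (h : IsContact L a c e s p) (hL : StrictConvex ℝ L) (hne : a + s • c ≠ 0) (hq : q ∈ L)
    (heq : a q + s * c q = e) : q = p :=
  eq_of_strictConvex_of_forall_le hL hne h.le hq h.mem heq h.eq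

end Gap

namespace CoordFrame

open Filter Topology MeasureTheory

variable {E : Type*} [NormedAddCommGroup E] [NormedSpace ℝ E] {L : Set E} {N : Seminorm ℝ E}
  {y : E →L[ℝ] ℝ} {b σ α β t : ℝ} {ω e Θ : ℝ → ℝ} (F : CoordFrame E)

/-- The value of `N` at the point `(F.turn t).u₁`, which moves along the line through `u₁` and
`u₂`. -/
def radius (N : Seminorm ℝ E) (t : ℝ) : ℝ := N (F.turn t).u₁

/-- The right derivative of `radius`. -/
def radiusSlope (N : Seminorm ℝ E) (t : ℝ) : ℝ := derivWithin (F.radius N) (Ioi t) t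

lemma turn_u₁_add_smul (t s : ℝ) : (F.turn t).u₁ + s • (F.turn t).u₂ = (F.turn (t + s)).u₁ := by
  simp only [turn]
  module

lemma convexOn_radius (N : Seminorm ℝ E) : ConvexOn ℝ univ (F.radius N) := by
  refine ⟨convex_univ, fun s _ t _ a b ha hb hab => ?_⟩
  have hu : (F.turn (a * s + b * t)).u₁ = a • (F.turn s).u₁ + b • (F.turn t).u₁ := by
    obtain rfl : b = 1 - a := by linarith
    simp only [turn]
    module
  simpa only [radius, hu, map_smul_eq_mul, Real.norm_of_nonneg ha, Real.norm_of_nonneg hb,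
    smul_eq_mul]
    using map_add_le_add N (a • (F.turn s).u₁) (b • (F.turn t).u₁)

lemma isSubgradient_radiusSlope (N : Seminorm ℝ E) :
    IsSubgradient (F.radius N) (F.radiusSlope N) :=
  isSubgradient_derivWithin_Ioi (F.convexOn_radius N)

lemma hasDerivWithinAt_radius (N : Seminorm ℝ E) (t : ℝ) :
    HasDerivWithinAt (F.radius N) (F.radiusSlope N t) (Ici t) t :=
  hasDerivWithinAt_derivWithin_Ioi (F.convexOn_radius N) t

lemma continuous_radius (N : Seminorm ℝ E) : Continuous (F.radius N) :=
  (F.isSubgradient_radiusSlope N).continuous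

lemma continuousWithinAt_radiusSlope (N : Seminorm ℝ E) (t : ℝ) :
    ContinuousWithinAt (F.radiusSlope N) (Ici t) t :=
  (F.isSubgradient_radiusSlope N).continuousWithinAt_Ici (F.hasDerivWithinAt_radius N t)

lemma radius_add_radiusSlope_mul_le (N : Seminorm ℝ E) (t s : ℝ) :
    N (F.turn t).u₁ + F.radiusSlope N t * s ≤ N ((F.turn t).u₁ + s • (F.turn t).u₂) := by
  rw [turn_u₁_add_smul]
  simpa only [radius, add_sub_cancel_left] using F.isSubgradient_radiusSlope N t (t + s)

lemma hasDerivWithinAt_turn_p₂ (s : Set ℝ) (t : ℝ) :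
    HasDerivWithinAt (fun t => (F.turn t).p₂) (-(F.turn t).p₁) s t := by
  have hid := hasDerivWithinAt_id t s
  refine ((hid.neg.smul_const F.p₁).add ((hid.const_sub 1).smul_const F.p₂)).congr_deriv ?_
  simp only [turn]
  module

lemma continuous_turn_p₂ : Continuous fun t => (F.turn t).p₂ :=
  continuous_iff_continuousAt.2 fun t =>
    (hasDerivWithinAt_univ.1 (F.hasDerivWithinAt_turn_p₂ univ t)).continuousAt

variable {F}

lemma exists_continuous_isTangentPoint (H : IsGrazed L N) (F : CoordFrame E) (hσ : σ * σ = 1) :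
    ∃ q : ℝ → E, (∀ t, (F.turn t).IsTangentPoint L N σ (q t)) ∧ Continuous q ∧
      Continuous fun t => (F.turn t).tangentSlope L N σ := by
  choose q hq using fun t => H.exists_isTangentPoint (F.turn t) hσ
  have hcont : Continuous fun t => (σ * (F.turn t).tangentSlope L N σ, q t) := by
    refine continuous_iff_continuousAt.2 fun t => continuousAt_of_isContact
      (F.isCompact_slice H.isCompact) (fun t => (hq t).isContact hσ) (fun p hp h => ?_) ?_
      ((F.continuous_radius N).smul continuous_const).continuousAt
      (F.continuous_turn_p₂.const_smul σ).continuousAt continuousAt_const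
    · refine (hq t).eq_of_tangent_eq H hp ?_
      rw [← h]
      simp only [tangent_apply, smul_apply, smul_eq_mul]
      linear_combination -((F.turn t).tangentSlope L N σ * (F.turn t).p₂ p) * hσ
    · exact ⟨-q t, H.neg_mem_slice F (hq t).mem, by simpa using (hq t).pos⟩
  refine ⟨q, hq, hcont.snd, (hcont.fst.const_mul σ).congr fun t => ?_⟩
  rw [← mul_assoc, hσ, one_mul]

lemma hasDerivWithinAt_tangentSlope_turn (H : IsGrazed L N) (F : CoordFrame E) (hσ : σ * σ = 1)
    (hy : IsGrazePlane L ((F.radius N t)⁻¹ • (F.turn t).u₁) y b) :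
    HasDerivWithinAt (fun t => (F.turn t).tangentSlope L N σ)
      (((F.turn t).tangentSlope L N σ - F.radiusSlope N t) *
        (b * (F.turn t).tangentSlope L N σ - y (F.turn t).u₂) / F.radius N t) (Ici t) t := by
  obtain ⟨q, hq, hqc, -⟩ := exists_continuous_isTangentPoint H F hσ
  have hG : F.radius N t ≠ 0 := (H.norm_u₁_pos (F.turn t)).ne'
  have hσ₀ : σ ≠ 0 := left_ne_zero_of_mul_eq_one hσ
  have hq₀ : (F.turn t).p₂ (q t) ≠ 0 := right_ne_zero_of_mul (hq t).pos.ne'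
  have hradius : HasDerivWithinAt (fun t => F.radius N t • (F.turn t).p₁)
      (F.radiusSlope N t • (F.turn t).p₁) (Ici t) t :=
    (F.hasDerivWithinAt_radius N t).smul_const (F.turn t).p₁
  have hturn : HasDerivWithinAt (fun t => σ • (F.turn t).p₂) (σ • -(F.turn t).p₁) (Ici t) t :=
    (F.hasDerivWithinAt_turn_p₂ (Ici t) t).const_smul σ
  have hd := (hasDerivWithinAt_of_isContact (P := F.slice L) (fun t => (hq t).isContact hσ)
    hqc.continuousAt hradius hturn (hasDerivWithinAt_const t _ 1)).const_mul σ
  refine (hd.congr_deriv ?_).congr (fun s _ => ?_) ?_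
  · have htan := (hq t).tangent_eq
    rw [tangent_apply, show N (F.turn t).u₁ = F.radius N t from rfl] at htan
    simp only [smul_apply, neg_apply, smul_eq_mul]
    rw [mul_div_assoc', div_eq_div_iff (mul_ne_zero hσ₀ hq₀) hG]
    linear_combination σ * ((F.turn t).tangentSlope L N σ - F.radiusSlope N t) *
      (htan - (hq t).p₂_mul_eq_one H hy) + σ * (F.turn t).tangentSlope L N σ *
      (F.turn t).p₁ (q t) * F.radius N t * hσ
  · rw [← mul_assoc, hσ, one_mul]
  · rw [← mul_assoc, hσ, one_mul]

lemma level_unique {y' : E →L[ℝ] ℝ} {b' : ℝ} (H : IsGrazed L N)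
    (hτ : F.tangentSlope L N (-1) < F.tangentSlope L N 1)
    (hy : IsGrazePlane L ((N F.u₁)⁻¹ • F.u₁) y b)
    (hy' : IsGrazePlane L ((N F.u₁)⁻¹ • F.u₁) y' b') : b = b' := by
  obtain ⟨q₁, h₁⟩ := H.exists_isTangentPoint F (σ := 1) (by norm_num)
  obtain ⟨q₂, h₂⟩ := H.exists_isTangentPoint F (σ := -1) (by norm_num)
  exact (h₁.level_eq h₂ H hτ hy).trans (h₁.level_eq h₂ H hτ hy').symm

lemma exists_continuous_level (H : IsGrazed L N) (F : CoordFrame E) :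
    ∃ ℓ : ℝ → ℝ, Continuous ℓ ∧ (∀ t, 0 ≤ ℓ t) ∧
      ∀ t, ∃ y, IsGrazePlane L ((F.radius N t)⁻¹ • (F.turn t).u₁) y (ℓ t) := by
  obtain ⟨q₁, h₁, hc₁, hτ₁⟩ := exists_continuous_isTangentPoint (σ := 1) H F (by norm_num)
  obtain ⟨q₂, h₂, hc₂, hτ₂⟩ := exists_continuous_isTangentPoint (σ := -1) H F (by norm_num)
  have hlt := fun t => tangentSlope_lt H (F.radius_add_radiusSlope_mul_le N t)
  have hnorm : ∀ t, N ((F.radius N t)⁻¹ • (F.turn t).u₁) = 1 := fun t => by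
    have hG : 0 < F.radius N t := H.norm_u₁_pos (F.turn t)
    rw [map_smul_eq_mul, Real.norm_of_nonneg (inv_nonneg.2 hG.le)]
    exact inv_mul_cancel₀ hG.ne'
  choose y ℓ hy using fun t => H.exists_isGrazePlane _ (hnorm t)
  refine ⟨ℓ, ?_, fun t => level_nonneg H (hlt t) (hy t), fun t => ⟨y t, hy t⟩⟩
  have hval : ∀ q : ℝ → E, Continuous q → Continuous fun t => (F.turn t).p₂ (q t) :=
    fun q hq => F.continuous_turn_p₂.clm_apply hq
  refine Continuous.congr ?_ fun t => ((h₁ t).level_eq (h₂ t) H (hlt t) (hy t)).symm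
  exact ((((hval q₁ hc₁).inv₀ fun t => right_ne_zero_of_mul (h₁ t).pos.ne').sub
    ((hval q₂ hc₂).inv₀ fun t => right_ne_zero_of_mul (h₂ t).pos.ne')).div (hτ₁.sub hτ₂)
    fun t => (sub_pos.2 (hlt t)).ne').sub continuous_const

variable (F) in
/-- A line of the plane `p₃ = 0` that moves with the frame `F.turn t`, as the functional which is
`e t` on it. It is parametrised such that for `σ = 1` and `σ = -1` the support line
`(F.turn t).tangent L N σ = 1` corresponds to `e = 1` and `Θ t = (F.turn t).tangentSlope L N σ`. -/
def movingLine (N : Seminorm ℝ E) (e Θ : ℝ → ℝ) (t : ℝ) : E →L[ℝ] ℝ :=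
  (e t * F.radius N t) • (F.turn t).p₁ + Θ t • (F.turn t).p₂

lemma movingLine_u₁ : F.movingLine N e Θ t (F.turn t).u₁ = e t * F.radius N t := by
  simp [movingLine]

lemma movingLine_add_smul_ne_zero (H : IsGrazed L N) (he : 0 < e t) {s : ℝ} :
    F.movingLine N e Θ t + s • σ • F.p₃ ≠ 0 := fun h => by
  have hval := DFunLike.congr_fun h (F.turn t).u₁
  have hu₁ : F.p₃ (F.turn t).u₁ = 0 := (F.turn t).p₃_u₁
  have hG : 0 < F.radius N t := H.norm_u₁_pos (F.turn t)
  simp only [add_apply, smul_apply, zero_apply, movingLine_u₁, hu₁, smul_zero, add_zero] at hval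
  exact (mul_pos he hG).ne' hval

lemma continuous_movingLine (he : Continuous e) (hΘ : Continuous Θ) :
    Continuous (F.movingLine N e Θ) :=
  ((he.mul (F.continuous_radius N)).smul continuous_const).add (hΘ.smul F.continuous_turn_p₂)

lemma hasDerivWithinAt_movingLine {e' Θ' : ℝ} (he : HasDerivWithinAt e e' (Ici t) t)
    (hΘ : HasDerivWithinAt Θ Θ' (Ici t) t) :
    HasDerivWithinAt (F.movingLine N e Θ)
      ((e' * F.radius N t + e t * F.radiusSlope N t - Θ t) • (F.turn t).p₁ + Θ' • (F.turn t).p₂)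
      (Ici t) t := by
  refine (((he.mul (F.hasDerivWithinAt_radius N t)).smul_const (F.turn t).p₁).add
    (hΘ.smul (F.hasDerivWithinAt_turn_p₂ (Ici t) t))).congr_deriv ?_
  module

lemma exists_continuous_isContact_movingLine (H : IsGrazed L N) (hσ : σ * σ = 1)
    (he : Continuous e) (hΘ : Continuous Θ) (hpos : ∀ t, 0 < e t)
    (hlt : ∀ t, ∀ q ∈ F.slice L, F.movingLine N e Θ t q < e t) :
    ∃ p : ℝ → E, Continuous p ∧
      Continuous (fun t => maxSlope L (F.movingLine N e Θ t) (σ • F.p₃) (e t)) ∧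
      ∀ t, IsContact L (F.movingLine N e Θ t) (σ • F.p₃) (e t)
        (maxSlope L (F.movingLine N e Θ t) (σ • F.p₃) (e t)) (p t) := by
  have hσ₀ : σ ≠ 0 := left_ne_zero_of_mul_eq_one hσ
  have hu₃ : 0 < (σ • F.p₃) (σ • F.u₃) := by simp [hσ]
  choose p hp using fun t => exists_isContact H.isCompact H.convex
    (fun q hq h => hlt t q ⟨hq, by simpa [hσ₀] using h⟩) (H.exists_mem_pos hu₃)
    (H.exists_mem_neg hu₃)
  have hcont : Continuous fun t =>
      (maxSlope L (F.movingLine N e Θ t) (σ • F.p₃) (e t), p t) := by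
    refine continuous_iff_continuousAt.2 fun t => continuousAt_of_isContact H.isCompact hp
      (fun q hq h => ?_) (H.exists_mem_neg hu₃) (continuous_movingLine he hΘ).continuousAt
      continuousAt_const he.continuousAt
    refine (hp t).eq_of_strictConvex H.strictConvex (fun h₀ => ?_) hq h
    exact movingLine_add_smul_ne_zero H (hpos t) h₀
  exact ⟨p, hcont.snd, hcont.fst, hp⟩

/-- The hypotheses on `e'` and `Θ'` say that the line turns about a point of the graze plane, where
the support planes through it touch `L`. -/
lemma hasDerivWithinAt_maxSlope_movingLine (H : IsGrazed L N) (hσ : σ * σ = 1)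
    (he : Continuous e) (hΘ : Continuous Θ) (hpos : ∀ t, 0 < e t)
    (hlt : ∀ t, ∀ q ∈ F.slice L, F.movingLine N e Θ t q < e t)
    (hy : IsGrazePlane L ((F.radius N t)⁻¹ • (F.turn t).u₁) y b) {x : ℝ}
    (hx : x * F.radius N t = Θ t - F.radiusSlope N t * e t)
    (he' : HasDerivWithinAt e (-b * x) (Ici t) t)
    (hΘ' : HasDerivWithinAt Θ (-y (F.turn t).u₂ * x) (Ici t) t) :
    HasDerivWithinAt (fun t => maxSlope L (F.movingLine N e Θ t) (σ • F.p₃) (e t))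
      (-σ * x * y F.u₃) (Ici t) t := by
  obtain ⟨p, hpc, -, hp⟩ := exists_continuous_isContact_movingLine H hσ he hΘ hpos hlt
  refine (hasDerivWithinAt_of_isContact hp hpc.continuousAt (hasDerivWithinAt_movingLine he' hΘ')
    (hasDerivWithinAt_const t _ (σ • F.p₃)) he').congr_deriv ?_
  have hσ₀ : σ * F.p₃ (p t) ≠ 0 := (hp t).pos.ne'
  have hG : F.radius N t ≠ 0 := (H.norm_u₁_pos (F.turn t)).ne'
  have hu₁ : F.p₃ (F.turn t).u₁ = 0 := (F.turn t).p₃_u₁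
  set f := F.movingLine N e Θ t + maxSlope L (F.movingLine N e Θ t) (σ • F.p₃) (e t) • σ • F.p₃
    with hf
  have hfz : f ((F.radius N t)⁻¹ • (F.turn t).u₁) = e t := by
    simp only [hf, map_smul, add_apply, smul_apply, movingLine_u₁, hu₁, smul_eq_mul,
      mul_zero, add_zero]
    field_simp
  have hyp : y (p t) = b := hy.apply_eq (p t) (hp t).mem f (movingLine_add_smul_ne_zero H (hpos t))
    (by rw [hfz]; exact (hp t).le) (by rw [hfz]; exact (hp t).eq)
  have hyu₁ : y (F.turn t).u₁ = (1 + b) * F.radius N t := by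
    have := hy.apply_apex
    rw [map_smul, smul_eq_mul, inv_mul_eq_iff_eq_mul₀ hG] at this
    linarith
  have hyp' : (F.turn t).p₁ (p t) * ((1 + b) * F.radius N t) +
      (F.turn t).p₂ (p t) * y (F.turn t).u₂ + F.p₃ (p t) * y F.u₃ = b := by
    rw [← hyu₁]
    exact ((F.turn t).apply_eq y (p t)).symm.trans hyp
  simp only [add_apply, smul_apply, zero_apply, smul_eq_mul]
  rw [div_eq_iff hσ₀]
  linear_combination x * hyp' - (F.turn t).p₁ (p t) * hx + x * y F.u₃ * F.p₃ (p t) * hσ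

lemma gap_movingLine_eq (H : IsGrazed L N) (he : Continuous e) (hΘ : Continuous Θ)
    (hpos : ∀ t, 0 < e t) (hlt : ∀ t, ∀ q ∈ F.slice L, F.movingLine N e Θ t q < e t)
    (hd : ∀ t, ∃ y b x, IsGrazePlane L ((F.radius N t)⁻¹ • (F.turn t).u₁) y b ∧
      x * F.radius N t = Θ t - F.radiusSlope N t * e t ∧
      HasDerivWithinAt e (-b * x) (Ici t) t ∧
      HasDerivWithinAt Θ (-y (F.turn t).u₂ * x) (Ici t) t) :
    gap L F.p₃ (F.movingLine N e Θ 1) (e 1) = gap L F.p₃ (F.movingLine N e Θ 0) (e 0) := by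
  have h₁ : (1 : ℝ) * 1 = 1 := by norm_num
  have h₂ : (-1 : ℝ) * -1 = 1 := by norm_num
  obtain ⟨-, -, hc₁, -⟩ := exists_continuous_isContact_movingLine H h₁ he hΘ hpos hlt
  obtain ⟨-, -, hc₂, -⟩ := exists_continuous_isContact_movingLine H h₂ he hΘ hpos hlt
  have hconst := constant_of_has_deriv_right_zero (a := 0) (b := 1) (hc₁.add hc₂).continuousOn
    (fun t _ => ?_) 1 (by simp)
  · have hneg : (-1 : ℝ) • F.p₃ = -F.p₃ := by module
    simpa only [gap, Pi.add_apply, one_smul, hneg] using hconst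
  · obtain ⟨y, b, x, hy, hx, he', hΘ'⟩ := hd t
    refine ((hasDerivWithinAt_maxSlope_movingLine H h₁ he hΘ hpos hlt hy hx he' hΘ').add
      (hasDerivWithinAt_maxSlope_movingLine H h₂ he hΘ hpos hlt hy hx he' hΘ')).congr_deriv ?_
    ring

variable (F) in
/-- The gap of the line `α * (tangent 1 - 1) + β * (tangent (-1) - 1) = 0`, which for positive `α`
and `β` runs through the apex of the two support lines and misses `L`. -/
def pencilGap (L : Set E) (N : Seminorm ℝ E) (α β : ℝ) : ℝ :=
  gap L F.p₃ (α • F.tangent L N 1 + β • F.tangent L N (-1)) (α + β)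

variable (F) in
/-- The logarithmic rate at which the weight of the tangent with sign `σ` decreases along the frames
`F.turn t`, when `ℓ t` is the level of the graze plane. -/
def weightRate (L : Set E) (N : Seminorm ℝ E) (ℓ : ℝ → ℝ) (σ t : ℝ) : ℝ :=
  ((F.turn t).tangentSlope L N σ - F.radiusSlope N t) * (ℓ t / F.radius N t)

variable {ℓ : ℝ → ℝ}

lemma continuous_tangentSlope_turn (H : IsGrazed L N) (hσ : σ * σ = 1) :
    Continuous fun t => (F.turn t).tangentSlope L N σ := by
  obtain ⟨-, -, -, hτ⟩ := exists_continuous_isTangentPoint H F hσ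
  exact hτ

lemma continuous_level_div_radius (H : IsGrazed L N) (hℓ : Continuous ℓ) :
    Continuous fun t => ℓ t / F.radius N t :=
  hℓ.div (F.continuous_radius N) fun t => (H.norm_u₁_pos (F.turn t)).ne'

lemma continuousWithinAt_weightRate (H : IsGrazed L N) (hσ : σ * σ = 1) (hℓ : Continuous ℓ) :
    ContinuousWithinAt (F.weightRate L N ℓ σ) (Ici t) t :=
  ((continuous_tangentSlope_turn H hσ).continuousWithinAt.sub
    (F.continuousWithinAt_radiusSlope N t)).mul
    (continuous_level_div_radius H hℓ).continuousWithinAt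

lemma intervalIntegrable_weightRate (H : IsGrazed L N) (hσ : σ * σ = 1) (hℓ : Continuous ℓ)
    (a b : ℝ) : IntervalIntegrable (F.weightRate L N ℓ σ) volume a b :=
  (((continuous_tangentSlope_turn H hσ).intervalIntegrable a b).sub
    (F.isSubgradient_radiusSlope N).monotone.intervalIntegrable).mul_continuousOn
    (continuous_level_div_radius H hℓ).continuousOn

lemma measurable_weightRate (H : IsGrazed L N) (hσ : σ * σ = 1) (hℓ : Continuous ℓ) :
    Measurable (F.weightRate L N ℓ σ) :=
  ((continuous_tangentSlope_turn H hσ).measurable.sub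
    (F.isSubgradient_radiusSlope N).monotone.measurable).mul
    (continuous_level_div_radius H hℓ).measurable

lemma weightRate_sign (H : IsGrazed L N) (hσ : σ * σ = 1) (hℓ : 0 ≤ ℓ t) :
    0 ≤ σ * F.weightRate L N ℓ σ t := by
  obtain ⟨q, hq⟩ := H.exists_isTangentPoint (F.turn t) hσ
  have hG : 0 < F.radius N t := H.norm_u₁_pos (F.turn t)
  rw [weightRate, ← mul_assoc]
  exact mul_nonneg (hq.sign_mul_sub_pos H hσ (F.radius_add_radiusSlope_mul_le N t)).le
    (div_nonneg hℓ hG.le)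

lemma weightRate_pos (H : IsGrazed L N) (hℓ : 0 < ℓ t) : 0 < F.weightRate L N ℓ 1 t := by
  obtain ⟨q, hq⟩ := H.exists_isTangentPoint (σ := 1) (F.turn t) (by norm_num)
  have hpos := hq.sign_mul_sub_pos H (by norm_num) (F.radius_add_radiusSlope_mul_le N t)
  rw [one_mul] at hpos
  exact mul_pos hpos (div_pos hℓ (H.norm_u₁_pos (F.turn t)))

variable (F) in
/-- The weight which keeps the gap of a line of the pencil constant along the frames `F.turn t`. -/
def weight (L : Set E) (N : Seminorm ℝ E) (ℓ : ℝ → ℝ) (σ : ℝ) : ℝ → ℝ :=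
  expDecay (F.weightRate L N ℓ σ)

variable (F) in
/-- The angular speed at which the weighted tangent with sign `σ` turns. -/
def weightTurn (L : Set E) (N : Seminorm ℝ E) (ℓ : ℝ → ℝ) (σ t : ℝ) : ℝ :=
  F.weight L N ℓ σ t * ((F.turn t).tangentSlope L N σ - F.radiusSlope N t) / F.radius N t

lemma continuous_weight (H : IsGrazed L N) (hσ : σ * σ = 1) (hℓ : Continuous ℓ) :
    Continuous (F.weight L N ℓ σ) :=
  continuous_expDecay (intervalIntegrable_weightRate H hσ hℓ)

lemma hasDerivWithinAt_weight (H : IsGrazed L N) (hσ : σ * σ = 1) (hℓ : Continuous ℓ) (t : ℝ) :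
    HasDerivWithinAt (F.weight L N ℓ σ) (-ℓ t * F.weightTurn L N ℓ σ t) (Ici t) t :=
  (hasDerivWithinAt_expDecay (intervalIntegrable_weightRate H hσ hℓ) (measurable_weightRate H hσ hℓ)
    (continuousWithinAt_weightRate H hσ hℓ)).congr_deriv (by
      rw [weightTurn, weightRate, weight]
      ring)

lemma hasDerivWithinAt_weight_mul_tangentSlope (H : IsGrazed L N) (hσ : σ * σ = 1)
    (hℓ : Continuous ℓ) (hy : IsGrazePlane L ((F.radius N t)⁻¹ • (F.turn t).u₁) y (ℓ t)) :
    HasDerivWithinAt (fun t => F.weight L N ℓ σ t * (F.turn t).tangentSlope L N σ)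
      (-y (F.turn t).u₂ * F.weightTurn L N ℓ σ t) (Ici t) t :=
  ((hasDerivWithinAt_weight H hσ hℓ t).mul
    (hasDerivWithinAt_tangentSlope_turn H F hσ hy)).congr_deriv (by
      rw [weightTurn]
      ring)

lemma pencilGap_turn_eq (H : IsGrazed L N) (hℓ : Continuous ℓ)
    (hy : ∀ t, ∃ y, IsGrazePlane L ((F.radius N t)⁻¹ • (F.turn t).u₁) y (ℓ t))
    (hα : 0 < α) (hβ : 0 < β) :
    (F.turn 1).pencilGap L N (F.weight L N ℓ 1 1 * α) (F.weight L N ℓ (-1) 1 * β) =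
      (F.turn 0).pencilGap L N α β := by
  have h₁ : (1 : ℝ) * 1 = 1 := by norm_num
  have h₂ : (-1 : ℝ) * -1 = 1 := by norm_num
  set e : ℝ → ℝ := fun t => F.weight L N ℓ 1 t * α + F.weight L N ℓ (-1) t * β with he
  set Θ : ℝ → ℝ := fun t => F.weight L N ℓ 1 t * (F.turn t).tangentSlope L N 1 * α +
    F.weight L N ℓ (-1) t * (F.turn t).tangentSlope L N (-1) * β with hΘ
  have hline : ∀ t, F.movingLine N e Θ t = (F.weight L N ℓ 1 t * α) • (F.turn t).tangent L N 1 +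
      (F.weight L N ℓ (-1) t * β) • (F.turn t).tangent L N (-1) := fun t => by
    simp only [movingLine, tangent, radius, he, hΘ]
    module
  have hec : Continuous e := ((continuous_weight H h₁ hℓ).mul_const α).add
    ((continuous_weight H h₂ hℓ).mul_const β)
  have hΘc : Continuous Θ :=
    (((continuous_weight H h₁ hℓ).mul (continuous_tangentSlope_turn H h₁)).mul_const α).add
      (((continuous_weight H h₂ hℓ).mul (continuous_tangentSlope_turn H h₂)).mul_const β)
  have hpos₁ : ∀ t, 0 < F.weight L N ℓ 1 t * α := fun t => mul_pos (expDecay_pos _ _) hα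
  have hpos₂ : ∀ t, 0 < F.weight L N ℓ (-1) t * β := fun t => mul_pos (expDecay_pos _ _) hβ
  have hpos : ∀ t, 0 < e t := fun t => add_pos (hpos₁ t) (hpos₂ t)
  have hlt : ∀ t, ∀ q ∈ F.slice L, F.movingLine N e Θ t q < e t := fun t q hq => by
    rw [hline]
    exact add_tangent_lt H (hpos₁ t) (hpos₂ t) hq
  have hconst := gap_movingLine_eq H hec hΘc hpos hlt fun t => by
    obtain ⟨y, hy⟩ := hy t
    have hG : F.radius N t ≠ 0 := (H.norm_u₁_pos (F.turn t)).ne'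
    refine ⟨y, ℓ t, F.weightTurn L N ℓ 1 t * α + F.weightTurn L N ℓ (-1) t * β, hy, ?_,
      (((hasDerivWithinAt_weight H h₁ hℓ t).mul_const α).add
        ((hasDerivWithinAt_weight H h₂ hℓ t).mul_const β)).congr_deriv (by ring),
      (((hasDerivWithinAt_weight_mul_tangentSlope H h₁ hℓ hy).mul_const α).add
        ((hasDerivWithinAt_weight_mul_tangentSlope H h₂ hℓ hy).mul_const β)).congr_deriv (by ring)⟩
    simp only [he, hΘ, weightTurn]
    field_simp
    ring
  rw [hline, hline] at hconst
  have hp₃ : ∀ t, (F.turn t).p₃ = F.p₃ := fun t => rfl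
  simpa only [pencilGap, hp₃, he, weight, expDecay_zero, one_mul] using hconst

lemma pencilGap_congr (H : IsGrazed L N) {F' : CoordFrame E} {k : ℝ} (h₃ : F'.p₃ = F.p₃)
    (hu : F'.u₁ = F.u₁) (h₂ : F'.p₂ = F.p₂) (h₁ : F'.p₁ = F.p₁ + k • F.p₂) :
    F'.pencilGap L N = F.pencilGap L N := by
  ext α β
  rw [pencilGap, pencilGap, tangent_congr H (by norm_num) h₃ hu h₂ h₁,
    tangent_congr H (by norm_num) h₃ hu h₂ h₁, h₃]

lemma exists_pencilGap_rot (H : IsGrazed L N) (F : CoordFrame E) :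
    ∃ r s, 0 < r ∧ r ≤ 1 ∧ 1 ≤ s ∧
      (∀ y b, IsGrazePlane L ((N F.u₁)⁻¹ • F.u₁) y b → 0 < b → r < 1) ∧
      ∀ α β, 0 < α → 0 < β → F.rot.pencilGap L N (r * α) (s * β) = F.pencilGap L N α β := by
  obtain ⟨ℓ, hℓ, hℓ₀, hy⟩ := exists_continuous_level H F
  have hi := fun σ hσ => intervalIntegrable_weightRate (F := F) (σ := σ) H hσ hℓ
  have hsign₁ : ∀ t, 0 ≤ F.weightRate L N ℓ 1 t := fun t => by
    simpa using weightRate_sign (F := F) (σ := 1) H (by norm_num) (hℓ₀ t)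
  have hsign₂ : ∀ t, F.weightRate L N ℓ (-1) t ≤ 0 := fun t => by
    simpa using weightRate_sign (F := F) (σ := -1) H (by norm_num) (hℓ₀ t)
  have hu₀ : (F.turn 0).u₁ = F.u₁ := by simp [turn]
  refine ⟨F.weight L N ℓ 1 1, F.weight L N ℓ (-1) 1, expDecay_pos _ _, expDecay_le_one hsign₁,
    one_le_expDecay hsign₂, fun y b hyb hb => ?_, fun α β hα hβ => ?_⟩
  · obtain ⟨y', hy'⟩ := hy 0
    have hb₀ : ℓ 0 = b := level_unique H
      (tangentSlope_lt H (F.radius_add_radiusSlope_mul_le N 0)) hy' (by rwa [hu₀])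
    exact expDecay_lt_one (hi 1 (by norm_num)) (continuousWithinAt_weightRate H (by norm_num) hℓ)
      hsign₁ (weightRate_pos H (hb₀ ▸ hb))
  · have h₀ : (F.turn 0).pencilGap L N = F.pencilGap L N :=
      pencilGap_congr H rfl hu₀ (by simp [turn]) (k := 1) (by simp [turn])
    have h₁ : (F.turn 1).pencilGap L N = F.rot.pencilGap L N :=
      pencilGap_congr H rfl (by simp [turn, rot]) (by simp only [turn, rot]; module) (k := -1)
        (by simp only [turn, rot]; module)
    rw [← h₀, ← h₁]
    exact pencilGap_turn_eq H hℓ hy hα hβ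

end CoordFrame

section Gap

open Pointwise

variable {E : Type*} [NormedAddCommGroup E] [NormedSpace ℝ E] {P : Set E} {a c n : E →L[ℝ] ℝ}
  {e k : ℝ}

lemma maxSlope_smul (P : Set E) (a c : E →L[ℝ] ℝ) (e : ℝ) (hk : 0 < k) :
    maxSlope P (k • a) c (k * e) = k * maxSlope P a c e := by
  have hset : {s | ∀ q ∈ P, (k • a) q + s * c q ≤ k * e} =
      k • {s | ∀ q ∈ P, a q + s * c q ≤ e} := by
    ext s
    rw [mem_smul_set_iff_inv_smul_mem₀ hk.ne']
    refine forall₂_congr fun q _ => ?_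
    rw [← mul_le_mul_iff_right₀ hk (b := a q + _)]
    simp only [smul_apply, smul_eq_mul, mul_add, ← mul_assoc, mul_inv_cancel₀ hk.ne', one_mul]
  rw [maxSlope, hset, Real.sSup_smul_of_nonneg hk.le, smul_eq_mul, maxSlope]

lemma maxSlope_neg (hP : ∀ q ∈ P, -q ∈ P) (a c : E →L[ℝ] ℝ) (e : ℝ) :
    maxSlope P (-a) c e = maxSlope P a (-c) e := by
  have hset : {s | ∀ q ∈ P, (-a) q + s * c q ≤ e} = {s | ∀ q ∈ P, a q + s * (-c) q ≤ e} := by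
    ext s
    constructor <;> intro h q hq <;> simpa using h (-q) (hP q hq)
  rw [maxSlope, hset, maxSlope]

lemma gap_smul (P : Set E) (c n : E →L[ℝ] ℝ) (e : ℝ) (hk : 0 < k) :
    gap P c (k • n) (k * e) = k * gap P c n e := by
  rw [gap, gap, maxSlope_smul P n c e hk, maxSlope_smul P n (-c) e hk, mul_add]

lemma gap_neg (hP : ∀ q ∈ P, -q ∈ P) (c n : E →L[ℝ] ℝ) (e : ℝ) :
    gap P c (-n) e = gap P c n e := by
  rw [gap, gap, maxSlope_neg hP, maxSlope_neg hP, neg_neg, add_comm]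

lemma IsContact.le_sub_div {a' : E →L[ℝ] ℝ} {s s' : ℝ} {p p' : E} (h : IsContact P a c e s p)
    (h' : IsContact P a' c e s' p') : s' ≤ s - (a' - a) p / c p := by
  rw [le_sub_iff_add_le, ← le_sub_iff_add_le', div_le_iff₀ h.pos, sub_apply]
  linarith [h.eq, h'.le p h.mem]

/-- `m` is a supergradient at `n` of the function `n ↦ gap L F.p₃ n 1`, considered on the lines
`n = 1` that miss the section of `L`. -/
def CoordFrame.IsGapSupergradient (F : CoordFrame E) (L : Set E) (n : E →L[ℝ] ℝ) (m : E) : Prop :=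
  ∀ n' : E →L[ℝ] ℝ, (∀ q ∈ F.slice L, n' q < 1) → gap L F.p₃ n' 1 ≤ gap L F.p₃ n 1 + (n' - n) m

end Gap

namespace IsGrazed

variable {E : Type*} [NormedAddCommGroup E] [NormedSpace ℝ E] {L : Set E} {N : Seminorm ℝ E}
  {n y : E →L[ℝ] ℝ} {e b : ℝ} {z : E} (F : CoordFrame E)

lemma exists_isContact_gap (H : IsGrazed L N) (hn : ∀ q ∈ F.slice L, n q < e) :
    ∃ p q, IsContact L n F.p₃ e (maxSlope L n F.p₃ e) p ∧
      IsContact L n (-F.p₃) e (maxSlope L n (-F.p₃) e) q := by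
  have hu₃ : 0 < F.p₃ F.u₃ := by simp
  have hu₃' : 0 < (-F.p₃) (-F.u₃) := by simp
  obtain ⟨p, hp⟩ := exists_isContact H.isCompact H.convex (fun q hq h => hn q ⟨hq, h⟩)
    (H.exists_mem_pos hu₃) (H.exists_mem_neg hu₃)
  obtain ⟨q, hq⟩ := exists_isContact H.isCompact H.convex
    (fun q hq h => hn q ⟨hq, by simpa using h⟩)
    (H.exists_mem_pos hu₃') (H.exists_mem_neg hu₃')
  exact ⟨p, q, hp, hq⟩

lemma gap_pos (H : IsGrazed L N) (hn : ∀ q ∈ F.slice L, n q < e) : 0 < gap L F.p₃ n e := by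
  obtain ⟨p, q, hp, hq⟩ := H.exists_isContact_gap F hn
  have hpos := hp.pos
  have hneg : F.p₃ q < 0 := by simpa using hq.pos
  obtain ⟨m, hm, hm₃, hf⟩ := exists_mem_eq_zero_of_pos_of_neg H.convex hp.mem hq.mem hpos hneg
  have hlt := mul_lt_mul_of_pos_right (hn m ⟨hm, hm₃⟩) (sub_pos.2 (hneg.trans hpos))
  have hqe := hq.eq
  simp only [neg_apply] at hqe
  rw [← hf n, eq_sub_of_add_eq hp.eq, eq_sub_of_add_eq hqe] at hlt
  refine pos_of_mul_pos_left (b := F.p₃ p * -F.p₃ q) ?_ (by nlinarith)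
  rw [gap]
  linarith

lemma isGapSupergradient_neg (H : IsGrazed L N) {m : E} (hm : F.IsGapSupergradient L n m) :
    F.IsGapSupergradient L (-n) (-m) := fun n' hn' => by
  have hle := hm (-n') fun q hq => by simpa using hn' (-q) (H.neg_mem_slice F hq)
  rw [gap_neg H.neg_mem] at hle ⊢
  refine hle.trans_eq ?_
  simp only [sub_apply, neg_apply, map_neg]
  ring

/-- The contact points of the two support planes give a supergradient of the gap. They lie in the
graze plane, which confines the supergradient. -/
lemma exists_isGapSupergradient (H : IsGrazed L N) (hy : IsGrazePlane L z y b) (hz : F.p₃ z = 0)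
    (hnz : n z = 1) (hn : ∀ q ∈ F.slice L, n q < 1) :
    ∃ m, F.p₃ m = 0 ∧ y m = b * (n m - gap L F.p₃ n 1) ∧ F.IsGapSupergradient L n m := by
  obtain ⟨p, q, hp, hq⟩ := H.exists_isContact_gap F hn
  have hpos := hp.pos
  have hneg : 0 < -F.p₃ q := hq.pos
  have hne : ∀ s : ℝ, n + s • F.p₃ ≠ 0 := fun s h => by
    simpa [hz, hnz] using DFunLike.congr_fun h z
  have hcontact : ∀ s : ℝ, ∀ r ∈ L, (∀ r' ∈ L, n r' + s * F.p₃ r' ≤ 1) → n r + s * F.p₃ r = 1 →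
      y r = b := fun s r hr hle heq => by
    refine hy.apply_eq r hr (n + s • F.p₃) (hne s) ?_ ?_ <;> simpa [hz, hnz]
  have hqle := hq.le
  have hqeq := hq.eq
  simp only [neg_apply, mul_neg, ← neg_mul] at hqle hqeq
  have hyp := hcontact _ p hp.mem hp.le hp.eq
  have hyq := hcontact _ q hq.mem hqle hqeq
  have hq₀ := (neg_pos.1 hneg).ne
  refine ⟨(F.p₃ q)⁻¹ • q - (F.p₃ p)⁻¹ • p, by simp [hpos.ne', hq₀], ?_, fun n' hn' => ?_⟩
  · simp only [gap, map_sub, map_smul, smul_eq_mul, hyp, hyq, eq_sub_of_add_eq hp.eq,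
      eq_sub_of_add_eq hqeq]
    field_simp
    ring
  · obtain ⟨p', q', hp', hq'⟩ := H.exists_isContact_gap F hn'
    have hle₁ := hp.le_sub_div hp'
    have hle₂ := hq.le_sub_div hq'
    rw [neg_apply, div_neg, sub_neg_eq_add, div_eq_inv_mul] at hle₂
    rw [div_eq_inv_mul] at hle₁
    rw [gap, gap, map_sub, map_smul, map_smul, smul_eq_mul, smul_eq_mul]
    linarith

end IsGrazed

section Scaling

open Filter Topology

variable {g : ℝ → ℝ} {f : ℝ → ℝ → ℝ} {q ρ c c' R S : ℝ}

lemma eq_pow_mul_of_mul_left (hq : 0 < q) (hg : ∀ β, 0 < β → g (q * β) = ρ * g β) (n : ℕ) {β : ℝ}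
    (hβ : 0 < β) : g (q ^ n * β) = ρ ^ n * g β := by
  induction n with
  | zero => simp
  | succ n ih => rw [pow_succ', mul_assoc, hg _ (by positivity), ih, pow_succ', mul_assoc]

lemma tendsto_pow_mul_of_mul_left {l : Filter ℝ} (hq : 0 < q)
    (hg : ∀ β, 0 < β → g (q * β) = ρ * g β) (hc : Tendsto g l (𝓝 c)) {β : ℝ} (hβ : 0 < β)
    (hl : Tendsto (fun n : ℕ => q ^ n * β) atTop l) :
    Tendsto (fun n : ℕ => ρ ^ n * g β) atTop (𝓝 c) :=
  (hc.comp hl).congr fun n => eq_pow_mul_of_mul_left hq hg n hβ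

lemma le_one_of_tendsto_pow_mul (hc' : 0 < c') (h : Tendsto (fun n : ℕ => ρ ^ n * c') atTop (𝓝 c)) :
    ρ ≤ 1 := by
  by_contra! hρ
  exact not_tendsto_nhds_of_tendsto_atTop
    ((tendsto_pow_atTop_atTop_of_one_lt hρ).atTop_mul_const hc') c h

/-- The limit at zero excludes that `g` grows along the powers of `q`, the limit at infinity that it
decays. -/
lemma eq_of_mul_left_of_tendsto (hq : 0 < q) (hq₁ : q < 1) (hpos : ∀ β, 0 < β → 0 < g β)
    (hg : ∀ β, 0 < β → g (q * β) = ρ * g β) (h₀ : Tendsto g (𝓝[>] 0) (𝓝 c))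
    (hinf : Tendsto g atTop (𝓝 c')) : ∀ β, 0 < β → g β = c := by
  have hρ : 0 < ρ := pos_of_mul_pos_left (hg 1 one_pos ▸ hpos _ (by positivity)) (hpos 1 one_pos).le
  have hzero : ∀ β : ℝ, 0 < β → Tendsto (fun n : ℕ => q ^ n * β) atTop (𝓝[>] 0) := fun β hβ =>
    tendsto_nhdsWithin_iff.2 ⟨by
      simpa using (tendsto_pow_atTop_nhds_zero_of_lt_one hq.le hq₁).mul_const β,
      Eventually.of_forall fun n => mul_pos (pow_pos hq n) hβ⟩
  have hiter : ∀ β, 0 < β → Tendsto (fun n : ℕ => ρ ^ n * g β) atTop (𝓝 c) := fun β hβ =>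
    tendsto_pow_mul_of_mul_left hq hg h₀ hβ (hzero β hβ)
  have hle : ρ ≤ 1 := le_one_of_tendsto_pow_mul (hpos 1 one_pos) (hiter 1 one_pos)
  have hinv : ∀ β, 0 < β → g (q⁻¹ * β) = ρ⁻¹ * g β := fun β hβ => by
    rw [eq_inv_mul_iff_mul_eq₀ hρ.ne', ← hg _ (by positivity), mul_inv_cancel_left₀ hq.ne']
  have hle' : ρ⁻¹ ≤ 1 := le_one_of_tendsto_pow_mul (hpos 1 one_pos)
    (tendsto_pow_mul_of_mul_left (inv_pos.2 hq) hinv hinf one_pos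
      ((tendsto_pow_atTop_atTop_of_one_lt ((one_lt_inv₀ hq).2 hq₁)).atTop_mul_const one_pos))
  obtain rfl : ρ = 1 := le_antisymm hle ((inv_le_one₀ hρ).1 hle')
  intro β hβ
  simpa using hiter β hβ

lemma exists_eq_mul_sqrt_of_scaling (hpos : ∀ α β, 0 < α → 0 < β → 0 < f α β)
    (hhom : ∀ l α β, 0 < l → f (l * α) (l * β) = l * f α β) (hR : 0 < R) (hRS : R < S)
    (hf : ∀ α β, 0 < α → 0 < β → f (R * α) (S * β) = f α β)
    (h₁ : Tendsto (fun β => f 1 β / √β) (𝓝[>] 0) (𝓝 c))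
    (h₂ : Tendsto (fun α => f α 1 / √α) (𝓝[>] 0) (𝓝 c')) :
    ∃ C > 0, ∀ α β, 0 < α → 0 < β → f α β = C * √(α * β) := by
  have hS : 0 < S := hR.trans hRS
  have hinf : Tendsto (fun β => f 1 β / √β) atTop (𝓝 c') := by
    refine (h₂.comp tendsto_inv_atTop_nhdsGT_zero).congr' ?_
    filter_upwards [eventually_gt_atTop 0] with β hβ
    have hβ' := hhom β β⁻¹ 1 hβ
    rw [mul_inv_cancel₀ hβ.ne', mul_one] at hβ'
    rw [Function.comp_apply, hβ', Real.sqrt_inv, div_inv_eq_mul, mul_comm β, mul_div_assoc,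
      Real.div_sqrt]
  have hconst := eq_of_mul_left_of_tendsto (g := fun β => f 1 β / √β) (ρ := R / √(R / S))
    (div_pos hR hS) ((div_lt_one hS).2 hRS)
    (fun β hβ => div_pos (hpos 1 β one_pos hβ) (Real.sqrt_pos.2 hβ)) (fun β hβ => ?_) h₁ hinf
  · have hc : f 1 1 = c := by simpa using hconst 1 one_pos
    refine ⟨c, hc ▸ hpos 1 1 one_pos one_pos, fun α β hα hβ => ?_⟩
    have hαβ : f α β = α * f 1 (β / α) := by
      rw [← hhom α 1 (β / α) hα, mul_one, mul_div_cancel₀ _ hα.ne']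
    have hβα : α * β = α ^ 2 * (β / α) := by field_simp
    rw [hαβ, (div_eq_iff (Real.sqrt_pos.2 (div_pos hβ hα)).ne').1 (hconst _ (div_pos hβ hα)), hβα,
      Real.sqrt_mul (sq_nonneg α), Real.sqrt_sq hα.le]
    ring
  · have hscale : f 1 (R / S * β) = R * f 1 β := by
      rw [← hf 1 (R / S * β) one_pos (by positivity), ← hhom R 1 β hR]
      congr 1
      field_simp
    simp only [hscale, Real.sqrt_mul (div_pos hR hS).le]
    rw [mul_div_mul_comm]

end Scaling

section SquareRoot

open Topology

/-- A line that touches the graph of `C √((u - s) (s - v))` from above is tangent to it. -/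
lemma two_mul_mul_eq_of_sqrt_le {φ : ℝ → ℝ} {C u v τ d : ℝ} (hτ : τ ∈ Ioo v u)
    (hφ : ∀ s ∈ Ioo v u, φ s = C * √((u - s) * (s - v)))
    (hle : ∀ s ∈ Ioo v u, φ s ≤ φ τ + (s - τ) * d) :
    2 * φ τ * d = C ^ 2 * (u + v - 2 * τ) := by
  have hpos : 0 < (u - τ) * (τ - v) := mul_pos (sub_pos.2 hτ.2) (sub_pos.2 hτ.1)
  have hφ' : HasDerivAt φ (C * ((-1 * (τ - v) + (u - τ) * 1) / (2 * √((u - τ) * (τ - v))))) τ :=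
    (((((hasDerivAt_id τ).const_sub u).mul ((hasDerivAt_id τ).sub_const v)).sqrt
      hpos.ne').const_mul C).congr_of_eventuallyEq (by
        filter_upwards [Ioo_mem_nhds hτ.1 hτ.2] with s hs using hφ s hs)
  have hmax : IsLocalMax (fun s => φ s - (s - τ) * d) τ := by
    filter_upwards [Ioo_mem_nhds hτ.1 hτ.2] with s hs
    linarith [hle s hs]
  have hd := hmax.hasDerivAt_eq_zero (hφ'.sub (((hasDerivAt_id τ).sub_const τ).mul_const d))
  have hsqrt_ne : √((u - τ) * (τ - v)) ≠ 0 := (Real.sqrt_pos.2 hpos).ne'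
  rw [hφ τ hτ, ← one_mul d, ← sub_eq_zero.1 hd]
  field_simp
  ring

end SquareRoot

namespace CoordFrame

open Filter Topology

variable {E : Type*} [NormedAddCommGroup E] [NormedSpace ℝ E] {L : Set E} {N : Seminorm ℝ E}
  {y : E →L[ℝ] ℝ} {b c τ α β r s : ℝ} {q : E} {F : CoordFrame E}

lemma pencilGap_smul {l : ℝ} (hl : 0 < l) :
    F.pencilGap L N (l * α) (l * β) = l * F.pencilGap L N α β := by
  rw [pencilGap, pencilGap, ← gap_smul L F.p₃ _ _ hl, smul_add, smul_smul, smul_smul, mul_add]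

lemma pencilGap_pos (H : IsGrazed L N) (hα : 0 < α) (hβ : 0 < β) : 0 < F.pencilGap L N α β :=
  H.gap_pos F fun _ hq => add_tangent_lt H hα hβ hq

lemma tangent_rot_rot (H : IsGrazed L N) (σ : ℝ) :
    F.rot.rot.tangent L N σ = -F.tangent L N σ := by
  have hu₁ : F.rot.rot.u₁ = -F.u₁ := rfl
  have hp₁ : F.rot.rot.p₁ = -F.p₁ := rfl
  have hp₂ : F.rot.rot.p₂ = -F.p₂ := rfl
  have hslice : F.rot.rot.slice L = F.slice L := rfl
  simp only [tangent, tangentSlope, hu₁, hp₁, hp₂, hslice, map_neg_eq_map, smul_neg,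
    maxSlope_neg (fun _ hq => H.neg_mem_slice F hq), neg_neg, neg_add]

lemma pencilGap_rot_rot (H : IsGrazed L N) : F.rot.rot.pencilGap L N = F.pencilGap L N := by
  ext α β
  rw [pencilGap, tangent_rot_rot H, tangent_rot_rot H, smul_neg, smul_neg, ← neg_add,
    gap_neg H.neg_mem]
  rfl

/-- The second quarter turn comes back to the line of `u₁`, since the antipode has the same
tangents up to sign. -/
lemma exists_pencilGap_eq_of_level_pos (H : IsGrazed L N)
    (hy : IsGrazePlane L ((N F.u₁)⁻¹ • F.u₁) y b) (hb : 0 < b) :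
    ∃ R S, 0 < R ∧ R < S ∧
      ∀ α β, 0 < α → 0 < β → F.pencilGap L N (R * α) (S * β) = F.pencilGap L N α β := by
  obtain ⟨r, s, hr, -, hs, hr₁, h⟩ := exists_pencilGap_rot H F
  obtain ⟨r', s', hr', hr'₁, hs', -, h'⟩ := exists_pencilGap_rot H F.rot
  refine ⟨r' * r, s' * s, mul_pos hr' hr, ?_, fun α β hα hβ => ?_⟩
  · calc r' * r ≤ r := mul_le_of_le_one_left hr.le hr'₁
      _ < 1 := hr₁ y b hy hb
      _ ≤ s' * s := one_le_mul_of_one_le_of_one_le hs' hs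
  · rw [mul_assoc, mul_assoc, ← pencilGap_rot_rot H, h' _ _ (by positivity) (by positivity),
      h α β hα hβ, pencilGap_rot_rot H]

/-- The gaps of the lines between the two support lines are those of an ellipsoid. -/
def HasSqrtGap (F : CoordFrame E) (L : Set E) (N : Seminorm ℝ E) (c : ℝ) : Prop :=
  ∀ α β, 0 < α → 0 < β → F.pencilGap L N α β = c * √(α * β)

lemma HasSqrtGap.exists_rot (h : F.HasSqrtGap L N c) (H : IsGrazed L N) :
    ∃ c', F.rot.HasSqrtGap L N c' := by
  obtain ⟨r, s, hr, -, hs, -, hrot⟩ := exists_pencilGap_rot H F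
  have hs₀ : 0 < s := one_pos.trans_le hs
  refine ⟨c / √(r * s), fun α β hα hβ => ?_⟩
  have hαβ := hrot (α / r) (β / s) (by positivity) (by positivity)
  rw [mul_div_cancel₀ _ hr.ne', mul_div_cancel₀ _ hs₀.ne', h _ _ (by positivity) (by positivity),
    div_mul_div_comm, Real.sqrt_div (by positivity)] at hαβ
  rw [hαβ]
  ring

lemma exists_hasSqrtGap {c₁ c₂ : ℝ} (H : IsGrazed L N) (hy : IsGrazePlane L ((N F.u₁)⁻¹ • F.u₁) y b)
    (hb : 0 < b) (h₁ : Tendsto (fun β => F.pencilGap L N 1 β / √β) (𝓝[>] 0) (𝓝 c₁))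
    (h₂ : Tendsto (fun α => F.pencilGap L N α 1 / √α) (𝓝[>] 0) (𝓝 c₂)) :
    ∃ c > 0, F.HasSqrtGap L N c := by
  obtain ⟨R, S, hR, hRS, h⟩ := exists_pencilGap_eq_of_level_pos H hy hb
  exact exists_eq_mul_sqrt_of_scaling (fun α β hα hβ => pencilGap_pos H hα hβ)
    (fun l α β hl => pencilGap_smul hl) hR hRS h h₁ h₂

lemma IsTangentPoint.norm_mul_p₁_add {σ : ℝ} (hq : F.IsTangentPoint L N σ q) :
    N F.u₁ * F.p₁ q + F.tangentSlope L N σ * F.p₂ q = 1 := by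
  rw [← tangent_apply, hq.tangent_eq]

lemma mem_Ioo_tangentSlope_iff (H : IsGrazed L N) (F : CoordFrame E) :
    τ ∈ Ioo (F.tangentSlope L N (-1)) (F.tangentSlope L N 1) ↔
      ∀ q ∈ F.slice L, N F.u₁ * F.p₁ q + τ * F.p₂ q < 1 := by
  constructor
  · intro hτ q hq
    have hlt := add_tangent_lt H (sub_pos.2 hτ.1) (sub_pos.2 hτ.2) hq
    simp only [tangent_apply] at hlt
    refine lt_of_mul_lt_mul_left (a := F.tangentSlope L N 1 - F.tangentSlope L N (-1)) ?_
      (by linarith [hτ.1, hτ.2])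
    linarith
  · intro hτ
    obtain ⟨q₁, h₁⟩ := H.exists_isTangentPoint F (σ := 1) (by norm_num)
    obtain ⟨q₂, h₂⟩ := H.exists_isTangentPoint F (σ := -1) (by norm_num)
    have hpos₁ := h₁.pos
    have hpos₂ := h₂.pos
    constructor
    · nlinarith [hτ q₂ h₂.mem, h₂.norm_mul_p₁_add]
    · nlinarith [hτ q₁ h₁.mem, h₁.norm_mul_p₁_add]

/-- The line `n = 1` is the barycentric combination of the two support lines with weights
`τ - tangentSlope (-1)` and `tangentSlope 1 - τ`. -/
lemma mul_gap_eq_pencilGap {n : E →L[ℝ] ℝ} (hn : n = N F.u₁ • F.p₁ + τ • F.p₂)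
    (hτ : τ ∈ Ioo (F.tangentSlope L N (-1)) (F.tangentSlope L N 1)) :
    (F.tangentSlope L N 1 - F.tangentSlope L N (-1)) * gap L F.p₃ n 1 =
      F.pencilGap L N (τ - F.tangentSlope L N (-1)) (F.tangentSlope L N 1 - τ) := by
  rw [← gap_smul L F.p₃ n 1 (by linarith [hτ.1, hτ.2] : (0 : ℝ) < _), pencilGap, hn, tangent,
    tangent]
  congr 1
  · module
  · ring

lemma HasSqrtGap.gap_eq (h : F.HasSqrtGap L N c) (hN : N F.u₁ = 1)
    (hτ : τ ∈ Ioo (F.tangentSlope L N (-1)) (F.tangentSlope L N 1)) :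
    gap L F.p₃ (F.p₁ + τ • F.p₂) 1 = c / (F.tangentSlope L N 1 - F.tangentSlope L N (-1)) *
      √((F.tangentSlope L N 1 - τ) * (τ - F.tangentSlope L N (-1))) := by
  have hpos : 0 < F.tangentSlope L N 1 - F.tangentSlope L N (-1) := by linarith [hτ.1, hτ.2]
  rw [div_mul_eq_mul_div, eq_div_iff hpos.ne', mul_comm,
    mul_gap_eq_pencilGap (by rw [hN, one_smul]) hτ, h _ _ (sub_pos.2 hτ.1) (sub_pos.2 hτ.2),
    mul_comm (τ - _)]

lemma HasSqrtGap.gap_sq (h : F.HasSqrtGap L N c) (hN : N F.u₁ = 1)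
    (hτ : τ ∈ Ioo (F.tangentSlope L N (-1)) (F.tangentSlope L N 1)) :
    gap L F.p₃ (F.p₁ + τ • F.p₂) 1 ^ 2 =
      (c / (F.tangentSlope L N 1 - F.tangentSlope L N (-1))) ^ 2 *
        ((F.tangentSlope L N 1 - τ) * (τ - F.tangentSlope L N (-1))) := by
  rw [h.gap_eq hN hτ, mul_pow,
    Real.sq_sqrt (mul_nonneg (by linarith [hτ.2]) (by linarith [hτ.1]))]

lemma HasSqrtGap.two_mul_gap_mul (h : F.HasSqrtGap L N c) (H : IsGrazed L N) (hN : N F.u₁ = 1)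
    (hτ : τ ∈ Ioo (F.tangentSlope L N (-1)) (F.tangentSlope L N 1)) {m : E}
    (hm : F.IsGapSupergradient L (F.p₁ + τ • F.p₂) m) :
    2 * gap L F.p₃ (F.p₁ + τ • F.p₂) 1 * F.p₂ m =
      (c / (F.tangentSlope L N 1 - F.tangentSlope L N (-1))) ^ 2 *
        (F.tangentSlope L N 1 + F.tangentSlope L N (-1) - 2 * τ) := by
  refine two_mul_mul_eq_of_sqrt_le (φ := fun s => gap L F.p₃ (F.p₁ + s • F.p₂) 1) hτ
    (fun s hs => h.gap_eq hN hs) fun s hs => ?_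
  have hlt := (mem_Ioo_tangentSlope_iff H F).1 hs
  rw [hN] at hlt
  refine (hm (F.p₁ + s • F.p₂) fun q hq => by simpa using hlt q hq).trans_eq ?_
  rw [add_sub_add_left_eq_sub, sub_apply, smul_apply, smul_apply, smul_eq_mul, smul_eq_mul, sub_mul]

lemma tangentSlope_add_eq_zero_of_level_eq_zero (H : IsGrazed L N) (h₁ : N F.u₁ = 1)
    (hy : IsGrazePlane L F.u₁ y 0) (hyu : y F.u₂ = 0) :
    F.tangentSlope L N 1 + F.tangentSlope L N (-1) = 0 := by
  have hz : (N F.u₁)⁻¹ • F.u₁ = F.u₁ := by rw [h₁, inv_one, one_smul]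
  have hbound : ∀ σ q, F.IsTangentPoint L N σ q → F.p₁ q = 0 ∧
      F.p₂ q * F.tangentSlope L N σ = 1 := fun σ q hq => by
    have hmul := hq.p₂_mul_eq_one H (hz.symm ▸ hy)
    have heq := hq.norm_mul_p₁_add
    simp only [hyu, add_zero, one_mul, sub_zero] at hmul
    exact ⟨by rw [h₁] at heq; linarith, hmul⟩
  obtain ⟨q₁, hq₁⟩ := H.exists_isTangentPoint F (σ := 1) (by norm_num)
  obtain ⟨q₂, hq₂⟩ := H.exists_isTangentPoint F (σ := -1) (by norm_num)
  have hle₁ := hq₂.tangent_le _ (H.neg_mem_slice F hq₁.mem)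
  have hle₂ := hq₁.tangent_le _ (H.neg_mem_slice F hq₂.mem)
  obtain ⟨hp₁, hmul₁⟩ := hbound 1 q₁ hq₁
  obtain ⟨hp₂, hmul₂⟩ := hbound (-1) q₂ hq₂
  have hpos₁ := hq₁.pos
  have hpos₂ := hq₂.pos
  simp only [tangent_apply, map_neg, hp₁, hp₂, mul_zero, zero_add] at hle₁ hle₂
  refine le_antisymm ?_ ?_
  · exact nonpos_of_mul_nonpos_right (a := -F.p₂ q₂) (by linarith) (by linarith)
  · exact nonneg_of_mul_nonneg_right (a := F.p₂ q₁) (by linarith) (by linarith)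

lemma mem_Ioo_tangentSlope_of_abs_add_lt (H : IsGrazed L N) (h₁ : N F.u₁ = 1)
    (hfree : ∀ q ∈ F.slice L, |F.p₁ q| + |F.p₂ q| < 1) (hτ : |τ| = 1) :
    τ ∈ Ioo (F.tangentSlope L N (-1)) (F.tangentSlope L N 1) := by
  refine (mem_Ioo_tangentSlope_iff H F).2 fun q hq => ?_
  have hle := le_abs_self (τ * F.p₂ q)
  rw [abs_mul, hτ, one_mul] at hle
  rw [h₁, one_mul]
  linarith [hfree q hq, le_abs_self (F.p₁ q)]

lemma exists_isGapSupergradient_of_apply_eq_zero (H : IsGrazed L N) (hN : N F.u₁ = 1)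
    (hy : IsGrazePlane L F.u₁ y b) (hyu : y F.u₂ = 0)
    (hτ : τ ∈ Ioo (F.tangentSlope L N (-1)) (F.tangentSlope L N 1)) :
    ∃ m, F.p₁ m = b * (τ * F.p₂ m - gap L F.p₃ (F.p₁ + τ • F.p₂) 1) ∧
      F.IsGapSupergradient L (F.p₁ + τ • F.p₂) m := by
  have hlt := (mem_Ioo_tangentSlope_iff H F).1 hτ
  rw [hN] at hlt
  obtain ⟨m, hm₃, hym, hm⟩ := H.exists_isGapSupergradient F (n := F.p₁ + τ • F.p₂) hy (by simp)
    (by simp) fun q hq => by simpa using hlt q hq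
  refine ⟨m, ?_, hm⟩
  rw [F.apply_eq y m, hm₃, hyu, hy.apply_apex, add_apply, smul_apply, smul_eq_mul] at hym
  linear_combination hym

/-- The lines `p₁ ± p₂ = 1` belong both to the pencil through `u₁` and to the one through `u₂`. -/
lemma HasSqrtGap.tangentSlope_add_eq_zero {c' : ℝ} (hF : F.HasSqrtGap L N c)
    (hF' : F.rot.HasSqrtGap L N c') (hc : 0 < c) (H : IsGrazed L N) (h₁ : N F.u₁ = 1)
    (h₂ : N F.u₂ = 1) (hy : IsGrazePlane L F.u₁ y b) (hyu : y F.u₂ = 0) (hb : 0 < b)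
    (hfree : ∀ q ∈ F.slice L, |F.p₁ q| + |F.p₂ q| < 1) :
    F.tangentSlope L N 1 + F.tangentSlope L N (-1) = 0 := by
  have habs : |(-1 : ℝ)| = 1 := by rw [abs_neg, abs_one]
  have hfree' : ∀ q ∈ F.rot.slice L, |F.rot.p₁ q| + |F.rot.p₂ q| < 1 := fun q hq => by
    simpa [rot, add_comm] using hfree q hq
  have hmem := mem_Ioo_tangentSlope_of_abs_add_lt H h₁ hfree abs_one
  have hmem_neg := mem_Ioo_tangentSlope_of_abs_add_lt H h₁ hfree habs
  have hrot := mem_Ioo_tangentSlope_of_abs_add_lt H h₂ hfree' abs_one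
  have hrot_neg := mem_Ioo_tangentSlope_of_abs_add_lt H h₂ hfree' habs
  obtain ⟨m, hm, hsup⟩ := exists_isGapSupergradient_of_apply_eq_zero H h₁ hy hyu hmem
  obtain ⟨m', hm', hsup'⟩ := exists_isGapSupergradient_of_apply_eq_zero H h₁ hy hyu hmem_neg
  have hn : F.p₁ + (1 : ℝ) • F.p₂ = F.rot.p₁ + (-1 : ℝ) • F.rot.p₂ := by
    simp only [rot]; module
  have hn' : -(F.p₁ + (-1 : ℝ) • F.p₂) = F.rot.p₁ + (1 : ℝ) • F.rot.p₂ := by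
    simp only [rot]; module
  have hgap' := gap_neg H.neg_mem F.p₃ (F.p₁ + (-1 : ℝ) • F.p₂) 1
  have e₁ := hF.two_mul_gap_mul H h₁ hmem hsup
  have e₂ := hF'.two_mul_gap_mul H h₂ hrot_neg (m := m) (hn ▸ hsup)
  have e₃ := hF.two_mul_gap_mul H h₁ hmem_neg hsup'
  have e₄ := hF'.two_mul_gap_mul H h₂ hrot (m := -m') (hn' ▸ H.isGapSupergradient_neg F hsup')
  have s₁ := hF.gap_sq h₁ hmem
  have s₂ := hF'.gap_sq h₂ hrot_neg
  have s₃ := hF.gap_sq h₁ hmem_neg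
  have s₄ := hF'.gap_sq h₂ hrot
  rw [← hn] at e₂ s₂
  rw [← hn'] at e₄ s₄
  have hp₂ : F.rot.p₂ = -F.p₁ := rfl
  have hp₃ : F.rot.p₃ = F.p₃ := rfl
  simp only [hp₂, hp₃, hgap', neg_apply, map_neg, neg_neg] at e₂ e₄ s₂ s₄
  set X := gap L F.p₃ (F.p₁ + (1 : ℝ) • F.p₂) 1
  set Y := gap L F.p₃ (F.p₁ + (-1 : ℝ) • F.p₂) 1
  set u := F.tangentSlope L N 1
  set v := F.tangentSlope L N (-1)
  have hC : 0 < c / (u - v) := div_pos hc (by linarith [hmem.1, hmem.2])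
  have hzero : (c / (u - v)) ^ 2 * (1 + b) * (u + v) = 0 := by
    linear_combination X * hm - Y * hm' + (1 / 2) * (e₂ + b * e₁ + e₄ + b * e₃) -
      b * (s₁ - s₃) + (1 / 2) * (s₂ - s₄ - (s₁ - s₃))
  exact (mul_eq_zero.1 hzero).resolve_left (by positivity)

theorem tangentSlope_add_eq_zero {c₁ c₂ : ℝ} (H : IsGrazed L N) (h₁ : N F.u₁ = 1)
    (h₂ : N F.u₂ = 1) (hy : IsGrazePlane L F.u₁ y b) (hyu : y F.u₂ = 0)
    (hfree : ∀ q ∈ F.slice L, |F.p₁ q| + |F.p₂ q| < 1)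
    (hlim₁ : Tendsto (fun β => F.pencilGap L N 1 β / √β) (𝓝[>] 0) (𝓝 c₁))
    (hlim₂ : Tendsto (fun α => F.pencilGap L N α 1 / √α) (𝓝[>] 0) (𝓝 c₂)) :
    F.tangentSlope L N 1 + F.tangentSlope L N (-1) = 0 := by
  have hz : (N F.u₁)⁻¹ • F.u₁ = F.u₁ := by rw [h₁, inv_one, one_smul]
  have hy' : IsGrazePlane L ((N F.u₁)⁻¹ • F.u₁) y b := hz.symm ▸ hy
  have hmem := mem_Ioo_tangentSlope_of_abs_add_lt H h₁ hfree abs_one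
  rcases (level_nonneg H (hmem.1.trans hmem.2) hy').eq_or_lt with rfl | hb
  · exact tangentSlope_add_eq_zero_of_level_eq_zero H h₁ hy hyu
  · obtain ⟨c, hc, hF⟩ := exists_hasSqrtGap H hy' hb hlim₁ hlim₂
    obtain ⟨c', hF'⟩ := hF.exists_rot H
    exact hF.tangentSlope_add_eq_zero hF' hc H h₁ h₂ hy hyu hb hfree

end CoordFrame

section Chords

open Filter Topology Pointwise

variable {σ : ℝ}

lemma chordLength_smul (Z : Set (ℝ × ℝ)) (t l : ℝ) (hσ : σ * σ = 1) :
    chordLength (σ • Z) t l = chordLength Z t (σ * l) := by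
  rcases mul_self_eq_one_iff.1 hσ with rfl | rfl
  · rw [one_smul, one_mul]
  refine congrArg sSup (Set.ext fun w => ⟨?_, ?_⟩)
  · rintro ⟨_, ⟨z, hz, rfl⟩, _, ⟨z', hz', rfl⟩, hl, hl', rfl⟩
    simp only [neg_smul, one_smul, Prod.fst_neg, Prod.snd_neg] at hl hl'
    refine ⟨z', hz', z, hz, by linarith, by linarith, by simp; ring⟩
  · rintro ⟨z, hz, z', hz', hl, hl', rfl⟩
    refine ⟨_, smul_mem_smul_set hz', _, smul_mem_smul_set hz, ?_, ?_, ?_⟩ <;> simp <;> linarith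

lemma tendsto_one_add_mul_comp_div_sqrt {ψ : ℝ → ℝ} {c M : ℝ}
    (hψ : Tendsto (fun ε => ψ ε / √ε) (𝓝[>] 0) (𝓝 c)) (hM : 0 < M) :
    Tendsto (fun β => (1 + β) * ψ (M * (β / (1 + β))) / √β) (𝓝[>] 0) (𝓝 (c * √M)) := by
  have hε : Tendsto (fun β : ℝ => M * (β / (1 + β))) (𝓝[>] 0) (𝓝[>] 0) := by
    refine tendsto_nhdsWithin_iff.2 ⟨?_, ?_⟩
    · have hcont : ContinuousAt (fun β : ℝ => M * (β / (1 + β))) 0 := by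
        fun_prop (disch := norm_num)
      simpa using hcont.tendsto.mono_left (nhdsWithin_le_nhds (s := Ioi 0))
    · filter_upwards [self_mem_nhdsWithin] with β (hβ : 0 < β)
      exact mul_pos hM (by positivity)
  have hfactor : Tendsto (fun β : ℝ => √(M * (1 + β))) (𝓝[>] 0) (𝓝 √M) :=
    ((by fun_prop : Continuous fun β : ℝ => √(M * (1 + β))).tendsto' 0 _ (by simp)).mono_left
      nhdsWithin_le_nhds
  refine ((hψ.comp hε).mul hfactor).congr' ?_
  filter_upwards [self_mem_nhdsWithin] with β (hβ : 0 < β)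
  have h1 : (0 : ℝ) < 1 + β := by linarith
  have hsqrt : √(M * (1 + β)) * √β = √(M * (β / (1 + β))) * (1 + β) := by
    rw [← Real.sqrt_mul (by positivity), ← Real.sqrt_sq h1.le, ← Real.sqrt_mul (by positivity),
      Real.sqrt_sq h1.le]
    congr 1
    field_simp
  have hne : √(M * (β / (1 + β))) ≠ 0 := by positivity
  have hne' : √β ≠ 0 := by positivity
  rw [Function.comp_apply, div_mul_eq_mul_div, div_eq_div_iff hne hne']
  linear_combination ψ (M * (β / (1 + β))) * hsqrt

end Chords

namespace CoordFrame

open Filter Topology Pointwise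

variable {E : Type*} [NormedAddCommGroup E] [NormedSpace ℝ E] {L : Set E} {N : Seminorm ℝ E}
  {y : E →L[ℝ] ℝ} {b t κ σ τ β : ℝ} {hκ : κ ≠ 0} {F : CoordFrame E}

variable (F) in
/-- The frame whose plane `p₃ = 0` is spanned by `u₁` and `u₂ + t • u₃`; the factor `κ` serves to
normalize the second vector. -/
def shear (t : ℝ) (hκ : κ ≠ 0) : CoordFrame E where
  p₁ := F.p₁
  p₂ := κ • F.p₂
  p₃ := F.p₃ - t • F.p₂
  u₁ := F.u₁
  u₂ := κ⁻¹ • (F.u₂ + t • F.u₃)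
  u₃ := F.u₃
  p₁_u₁ := by simp
  p₁_u₂ := by simp
  p₁_u₃ := by simp
  p₂_u₁ := by simp
  p₂_u₂ := by simp [hκ]
  p₂_u₃ := by simp
  p₃_u₁ := by simp
  p₃_u₂ := by simp [mul_comm]
  p₃_u₃ := by simp
  expand q := by
    conv_lhs => rw [F.expand q]
    simp only [smul_apply, sub_apply, smul_eq_mul, smul_smul]
    rw [mul_right_comm, mul_inv_cancel₀ hκ]
    module

variable (F) in
/-- The section of the polar of `L` by the plane of the functionals with value `1` at `u₁`, in the
coordinates given by the values at `u₂` and `u₃`. -/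
def dualSection (L : Set E) : Set (ℝ × ℝ) :=
  {z | ∀ q ∈ L, F.p₁ q + z.1 * F.p₂ q + z.2 * F.p₃ q ≤ 1}

lemma convex_dualSection : Convex ℝ (F.dualSection L) := by
  intro z hz z' hz' a b ha hb hab q hq
  have := add_le_add (mul_le_mul_of_nonneg_left (hz q hq) ha)
    (mul_le_mul_of_nonneg_left (hz' q hq) hb)
  simp only [Prod.fst_add, Prod.snd_add, Prod.smul_fst, Prod.smul_snd, smul_eq_mul]
  linear_combination this + (1 - F.p₁ q) * hab

lemma isCompact_dualSection (hL : (0 : E) ∈ interior L) : IsCompact (F.dualSection L) := by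
  refine isCompact_of_isClosed_isBounded ?_ ?_
  · simp only [dualSection, Set.ofPred_forall]
    exact isClosed_biInter fun q _ => isClosed_le (by fun_prop) (by fun_prop)
  · obtain ⟨ε₁, hε₁, h₁⟩ := exists_pos_smul_mem hL F.u₂
    obtain ⟨ε₂, hε₂, h₂⟩ := exists_pos_smul_mem hL (-F.u₂)
    obtain ⟨ε₃, hε₃, h₃⟩ := exists_pos_smul_mem hL F.u₃
    obtain ⟨ε₄, hε₄, h₄⟩ := exists_pos_smul_mem hL (-F.u₃)
    refine (isBounded_Icc (-(1 / ε₂), -(1 / ε₄)) (1 / ε₁, 1 / ε₃)).subset fun z hz => ?_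
    have hz₁ := hz _ h₁
    have hz₂ := hz _ h₂
    have hz₃ := hz _ h₃
    have hz₄ := hz _ h₄
    simp only [map_smul, map_neg, smul_eq_mul, p₁_u₂, p₁_u₃, p₂_u₂, p₂_u₃, p₃_u₂, p₃_u₃, mul_neg,
      neg_zero, mul_zero, mul_one, add_zero, zero_add] at hz₁ hz₂ hz₃ hz₄
    refine ⟨⟨?_, ?_⟩, ?_, ?_⟩
    · exact neg_le.1 ((le_div_iff₀ hε₂).2 (by linarith))
    · exact neg_le.1 ((le_div_iff₀ hε₄).2 (by linarith))
    · exact (le_div_iff₀ hε₁).2 hz₁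
    · exact (le_div_iff₀ hε₃).2 hz₃

lemma mem_dualSection_iff_shear {z : ℝ × ℝ} (hz : z.1 + t * z.2 = κ * τ) :
    z ∈ F.dualSection L ↔ ∀ q ∈ L, ((F.shear t hκ).p₁ + τ • (F.shear t hκ).p₂) q +
      z.2 * (F.shear t hκ).p₃ q ≤ 1 := by
  refine forall₂_congr fun q _ => ?_
  rw [eq_sub_of_add_eq hz]
  simp only [shear, add_apply, sub_apply, smul_apply, smul_eq_mul]
  ring_nf

lemma gap_shear_eq_chordLength (H : IsGrazed L N)
    (hlt : ∀ q ∈ (F.shear t hκ).slice L,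
      ((F.shear t hκ).p₁ + τ • (F.shear t hκ).p₂) q < 1) :
    gap L (F.shear t hκ).p₃ ((F.shear t hκ).p₁ + τ • (F.shear t hκ).p₂) 1 =
      chordLength (F.dualSection L) t (κ * τ) := by
  obtain ⟨p, q, hp, hq⟩ := H.exists_isContact_gap _ hlt
  have hlevel (s : ℝ) : κ * τ - t * s + t * s = κ * τ := sub_add_cancel ..
  symm
  refine IsGreatest.csSup_eq ⟨⟨(_, _), (mem_dualSection_iff_shear (hlevel _)).2 hp.le, (_, _),
    (mem_dualSection_iff_shear (hκ := hκ) (hlevel _)).2 fun r hr => ?_, hlevel _, hlevel _,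
    (sub_neg_eq_add _ _).symm⟩, ?_⟩
  · simpa only [neg_apply, mul_neg, neg_mul] using hq.le r hr
  · rintro _ ⟨z, hz, z', hz', hl, hl', rfl⟩
    rw [mem_dualSection_iff_shear (hκ := hκ) hl] at hz
    rw [mem_dualSection_iff_shear (hκ := hκ) hl'] at hz'
    have hle := hp.isGreatest.2 hz
    have hle' : -z'.2 ≤ _ := hq.isGreatest.2 fun r hr => by
      simpa only [neg_apply, mul_neg, neg_mul, neg_neg] using hz' r hr
    rw [gap]
    linarith

lemma topLevel_smul_dualSection (H : IsGrazed L N) (hN : N F.u₁ = 1) (hσ : σ * σ = 1)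
    (hpos : 0 < κ) : topLevel (σ • F.dualSection L) t =
      κ * (σ * (F.shear t hpos.ne').tangentSlope L N σ) := by
  set F' := F.shear t hpos.ne' with hF'
  have hN' : N F'.u₁ = 1 := hN
  refine IsGreatest.csSup_eq ⟨?_, ?_⟩
  · obtain ⟨q, hq⟩ := H.exists_isTangentPoint F' hσ
    obtain ⟨g, -, hle, hg⟩ := H.exists_extension F' (f := F'.tangent L N σ)
      (by simp [tangent_u₁, hN']) hq.tangent_le
    have hg₁ : g F.u₁ = 1 := by rw [hg F.u₁ F'.p₃_u₁]; exact (tangent_u₁ L N σ).trans hN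
    have hg₂ := hg F'.u₂ (by simp)
    rw [tangent_apply, p₁_u₂, p₂_u₂, mul_zero, zero_add, mul_one,
      show F'.u₂ = κ⁻¹ • (F.u₂ + t • F.u₃) from rfl, map_smul, map_add, map_smul, smul_eq_mul,
      smul_eq_mul, inv_mul_eq_iff_eq_mul₀ hpos.ne'] at hg₂
    refine ⟨σ • (g F.u₂, g F.u₃), smul_mem_smul_set fun q hq => ?_, ?_⟩
    · have := hle q hq
      rw [F.apply_eq g q, hg₁] at this
      linarith
    · simp only [Prod.smul_mk, smul_eq_mul]
      linear_combination σ * hg₂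
  · obtain ⟨q, hq⟩ := H.exists_isTangentPoint F' hσ
    rintro _ ⟨_, ⟨z, hz, rfl⟩, rfl⟩
    have hle := (mem_dualSection_iff_shear (hκ := hpos.ne') (τ := κ⁻¹ * (z.1 + t * z.2))
      (mul_inv_cancel_left₀ hpos.ne' _).symm).1 hz q hq.mem.1
    have heq := hq.tangent_eq
    rw [← hF', hq.mem.2, mul_zero, add_zero, add_apply, smul_apply, smul_eq_mul] at hle
    rw [tangent_apply, hN', one_mul] at heq
    have hmul : σ * (κ⁻¹ * (z.1 + t * z.2)) ≤ σ * F'.tangentSlope L N σ := by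
      refine le_of_mul_le_mul_right (a := σ * F'.p₂ q) ?_ hq.pos
      linear_combination hle - heq +
        (κ⁻¹ * (z.1 + t * z.2) - F'.tangentSlope L N σ) * F'.p₂ q * hσ
    calc σ * z.1 + t * (σ * z.2) = κ * (σ * (κ⁻¹ * (z.1 + t * z.2))) := by field_simp
      _ ≤ κ * (σ * F'.tangentSlope L N σ) := by gcongr

lemma gap_add_smul_tangent (H : IsGrazed L N) (hN : N F.u₁ = 1) (hσ : σ * σ = 1) (hpos : 0 < κ)
    (hβ : 0 < β) :
    let F' := F.shear t hpos.ne'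
    let M := κ * (F'.tangentSlope L N 1 - F'.tangentSlope L N (-1))
    gap L F'.p₃ (F'.tangent L N σ + β • F'.tangent L N (-σ)) (1 + β) =
      (1 + β) * chordLength (σ • F.dualSection L) t
        (topLevel (σ • F.dualSection L) t - M * (β / (1 + β))) := by
  intro F' M
  set τ := (F'.tangentSlope L N σ + β * F'.tangentSlope L N (-σ)) / (1 + β) with hτ
  have hβ' : 0 < 1 + β := by linarith
  have hN' : N F'.u₁ = 1 := hN
  have hn : F'.tangent L N σ + β • F'.tangent L N (-σ) = (1 + β) • (F'.p₁ + τ • F'.p₂) := by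
    rw [tangent, tangent, hN', smul_add (1 + β), smul_smul (1 + β), hτ, mul_div_cancel₀ _ hβ'.ne']
    module
  have hlt : ∀ q ∈ F'.slice L, (F'.p₁ + τ • F'.p₂) q < 1 := fun q hq => by
    refine lt_of_mul_lt_mul_left (a := 1 + β) ?_ hβ'.le
    rw [← smul_eq_mul, ← smul_apply, ← hn, mul_one]
    simp only [add_apply, smul_apply, smul_eq_mul]
    rcases mul_self_eq_one_iff.1 hσ with rfl | rfl
    · simpa using add_tangent_lt H one_pos hβ hq
    · simpa [add_comm] using add_tangent_lt H hβ one_pos hq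
  have hlevel : σ * (topLevel (σ • F.dualSection L) t - M * (β / (1 + β))) = κ * τ := by
    rw [topLevel_smul_dualSection H hN hσ hpos, hτ]
    rcases mul_self_eq_one_iff.1 hσ with rfl | rfl <;> simp only [neg_neg, M] <;> field_simp <;>
      ring
  rw [hn, chordLength_smul _ _ _ hσ, hlevel, ← gap_shear_eq_chordLength H hlt,
    ← gap_smul _ _ _ _ hβ', mul_one]

theorem tangentSlope_shear_add_eq_zero (H : IsGrazed L N) (hN : N F.u₁ = 1) (hpos : 0 < κ)
    (hu₂ : N (F.u₂ + t • F.u₃) = κ) (hy : IsGrazePlane L F.u₁ y b) (hy₂ : y F.u₂ = 0)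
    (hy₃ : y F.u₃ = 0)
    (hfree : ∀ q ∈ (F.shear t hpos.ne').slice L, |F.p₁ q| + |κ * F.p₂ q| < 1)
    (hsqrt : ∀ σ : ℝ, σ * σ = 1 → HasSqrtChord (σ • F.dualSection L) t) :
    (F.shear t hpos.ne').tangentSlope L N 1 + (F.shear t hpos.ne').tangentSlope L N (-1) = 0 := by
  set F' := F.shear t hpos.ne'
  have hmem := mem_Ioo_tangentSlope_of_abs_add_lt (F := F') H hN hfree abs_one
  have hlim (σ : ℝ) (hσ : σ * σ = 1) : ∃ c, Tendsto (fun β =>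
      gap L F'.p₃ (F'.tangent L N σ + β • F'.tangent L N (-σ)) (1 + β) / √β) (𝓝[>] 0) (𝓝 c) := by
    obtain ⟨c, hc⟩ := hsqrt σ hσ
    refine ⟨_, (tendsto_one_add_mul_comp_div_sqrt hc
      (mul_pos hpos (sub_pos.2 (hmem.1.trans hmem.2)))).congr' ?_⟩
    filter_upwards [self_mem_nhdsWithin] with β (hβ : 0 < β)
    rw [gap_add_smul_tangent H hN hσ hpos hβ]
  obtain ⟨c₁, hc₁⟩ := hlim 1 (by norm_num)
  obtain ⟨c₂, hc₂⟩ := hlim (-1) (by norm_num)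
  refine tangentSlope_add_eq_zero (F := F') (y := y) (b := b) (c₁ := c₁) (c₂ := c₂) H hN ?_ hy ?_
    hfree ?_ ?_
  · rw [show F'.u₂ = κ⁻¹ • (F.u₂ + t • F.u₃) from rfl, map_smul_eq_mul, hu₂,
      Real.norm_of_nonneg (inv_pos.2 hpos).le, inv_mul_cancel₀ hpos.ne']
  · simp [F', shear, hy₂, hy₃]
  · simpa only [pencilGap, one_smul] using hc₁
  · simpa only [pencilGap, one_smul, neg_neg, add_comm] using hc₂

end CoordFrame

section SupportCones

variable {L : Set E3} {x z : E3} {l : ℝ}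

lemma subset_coneGen : L ⊆ coneGen L x := fun q hq => ⟨q, hq, 1, zero_le_one, by module⟩

lemma isClosed_coneGen (hL : IsCompact L) (hx : x ∉ L) : IsClosed (coneGen L x) := by
  have : CompactSpace (Icc (0 : ℝ) 1 ×ˢ L) :=
    isCompact_iff_compactSpace.1 (isCompact_Icc.prod hL)
  have hclosed : IsClosed {r : (Icc (0 : ℝ) 1 ×ˢ L) × E3 |
      (1 - r.1.1.1) • (r.2 - x) = r.1.1.1 • (r.1.1.2 - x)} :=
    isClosed_eq (by fun_prop) (by fun_prop)
  convert isClosedMap_snd_of_compactSpace _ hclosed using 1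
  ext z
  constructor
  · rintro ⟨q, hq, l, hl, rfl⟩
    have hpos : 0 < 1 + l := by linarith
    have hs : (1 - l / (1 + l)) • (x + l • (q - x) - x) = (l / (1 + l)) • (q - x) := by
      rw [add_sub_cancel_left, smul_smul, one_sub_div hpos.ne', add_sub_cancel_right,
        div_mul_eq_mul_div, one_mul]
    exact ⟨⟨⟨(l / (1 + l), q), ⟨by positivity, (div_le_one hpos).2 (by linarith)⟩, hq⟩, _⟩,
      hs, rfl⟩
  · rintro ⟨⟨⟨⟨s, q⟩, ⟨hs₀, hs₁⟩, hq⟩, z⟩, hz, rfl⟩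
    have hs : s ≠ 1 := by
      rintro rfl
      refine hx ((?_ : q = x) ▸ hq)
      simpa [sub_eq_zero, eq_comm] using hz
    have hpos : 0 < 1 - s := sub_pos.2 (lt_of_le_of_ne hs₁ hs)
    refine ⟨q, hq, (1 - s)⁻¹ * s, mul_nonneg (inv_pos.2 hpos).le hs₀, ?_⟩
    rw [mul_smul, ← show (1 - s) • (z - x) = s • (q - x) from hz, inv_smul_smul₀ hpos.ne',
      add_sub_cancel]

lemma convex_coneGen (hL : Convex ℝ L) : Convex ℝ (coneGen L x) := by
  rintro _ ⟨q, hq, l, hl, rfl⟩ _ ⟨q', hq', l', hl', rfl⟩ a b ha hb hab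
  obtain ⟨r, hr, hcombo⟩ : ∃ r ∈ L, (a * l + b * l') • r = (a * l) • q + (b * l') • q' :=
    hL.exists_mem_add_smul_eq hq hq' (by positivity) (by positivity)
  refine ⟨r, hr, a * l + b * l', by positivity, ?_⟩
  linear_combination (norm := module) hab • x - hcombo

lemma add_smul_sub_mem_coneGen (hl : 0 ≤ l) (hz : z ∈ coneGen L x) :
    x + l • (z - x) ∈ coneGen L x := by
  obtain ⟨q, hq, s, hs, rfl⟩ := hz
  exact ⟨q, hq, l * s, by positivity, by module⟩

lemma add_smul_sub_mem_interior_coneGen (hl : 0 < l) (hz : z ∈ interior (coneGen L x)) :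
    x + l • (z - x) ∈ interior (coneGen L x) := by
  have hsub : AffineMap.homothety x l '' coneGen L x ⊆ coneGen L x := by
    rintro _ ⟨q, hq, rfl⟩
    simpa [AffineMap.homothety_apply, add_comm] using add_smul_sub_mem_coneGen hl.le hq
  have hmem := interior_mono hsub <|
    (AffineMap.homothety_isOpenMap x l hl.ne').image_interior_subset _ (mem_image_of_mem _ hz)
  simpa [AffineMap.homothety_apply, add_comm] using hmem

lemma mem_suppCone_iff (hL : IsCompact L) (hx : x ∉ L) :
    z ∈ suppCone L x ↔ z ∈ coneGen L x ∧ z ∉ interior (coneGen L x) := by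
  rw [suppCone, (isClosed_coneGen hL hx).frontier_eq, mem_sdiff]

lemma add_smul_sub_mem_suppCone (hL : IsCompact L) (hx : x ∉ L) (hl : 0 < l)
    (hz : z ∈ suppCone L x) : x + l • (z - x) ∈ suppCone L x := by
  rw [mem_suppCone_iff hL hx] at hz ⊢
  refine ⟨add_smul_sub_mem_coneGen hl.le hz.1, fun hint => hz.2 ?_⟩
  simpa [smul_smul, inv_mul_cancel₀ hl.ne'] using
    add_smul_sub_mem_interior_coneGen (inv_pos.2 hl) hint

lemma neg_mem_coneGen (hL : ∀ q ∈ L, -q ∈ L) (hz : z ∈ coneGen L x) : -z ∈ coneGen L (-x) := by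
  obtain ⟨q, hq, l, hl, rfl⟩ := hz
  exact ⟨-q, hL q hq, l, hl, by module⟩

lemma mem_suppCone_neg_iff (hL : ∀ q ∈ L, -q ∈ L) : z ∈ suppCone L (-x) ↔ -z ∈ suppCone L x := by
  have hpre : coneGen L (-x) = Homeomorph.neg E3 ⁻¹' coneGen L x :=
    Subset.antisymm (fun q hq => by simpa using neg_mem_coneGen hL hq)
      fun q hq => by simpa using neg_mem_coneGen hL hq
  rw [suppCone, hpre, ← Homeomorph.preimage_frontier]
  rfl

lemma mem_graze_iff (hL : IsCompact L) (hx : x ∉ L) :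
    z ∈ graze L x ↔ z ∈ L ∧ z ∈ suppCone L x := by
  refine ⟨fun hz => ⟨hL.isClosed.frontier_subset hz.2, hz.1⟩, fun ⟨hz, hzS⟩ => ⟨hzS, ?_⟩⟩
  exact ⟨subset_closure hz, fun hint =>
    ((mem_suppCone_iff hL hx).1 hzS).2 (interior_mono subset_coneGen hint)⟩

lemma mem_graze_of_apply_eq (hL : IsCompact L) (hx : x ∉ L) (hz : z ∈ L) {f : E3 →L[ℝ] ℝ}
    (hf : f ≠ 0) (hle : ∀ q ∈ L, f q ≤ f x) (heq : f z = f x) : z ∈ graze L x := by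
  refine (mem_graze_iff hL hx).2 ⟨hz,
    (mem_suppCone_iff hL hx).2 ⟨subset_coneGen hz, fun hint => ?_⟩⟩
  have hmax : IsLocalMax f z := by
    filter_upwards [mem_interior_iff_mem_nhds.1 hint]
    rintro _ ⟨q, hq, l, hl, rfl⟩
    rw [heq, map_add, map_smul, map_sub, smul_eq_mul]
    exact add_le_of_nonpos_right (mul_nonpos_of_nonneg_of_nonpos hl (sub_nonpos.2 (hle q hq)))
  exact hf (hmax.hasFDerivAt_eq_zero f.hasFDerivAt)

lemma exists_mem_graze_eq_add_smul_sub (hL : IsCompact L) (hx : x ∉ L) (hz : z ∈ suppCone L x)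
    (hne : z ≠ x) : ∃ q ∈ graze L x, ∃ l : ℝ, 0 < l ∧ z = x + l • (q - x) := by
  obtain ⟨q, hq, l, hl, rfl⟩ := ((mem_suppCone_iff hL hx).1 hz).1
  have hpos : 0 < l := hl.lt_of_ne' fun h => hne (by simp [h])
  refine ⟨q, (mem_graze_iff hL hx).2 ⟨hq, ?_⟩, l, hpos, rfl⟩
  simpa [smul_smul, inv_mul_cancel₀ hpos.ne'] using
    add_smul_sub_mem_suppCone hL hx (inv_pos.2 hpos) hz

end SupportCones

section Gauges

open Topology

variable {E : Type*} [NormedAddCommGroup E] [NormedSpace ℝ E] {C K : Set E}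

lemma zero_mem_interior_of_neg_mem (hK : Convex ℝ K) (hint : (interior K).Nonempty)
    (hneg : ∀ p ∈ K, -p ∈ K) : (0 : E) ∈ interior K := by
  obtain ⟨p, hp⟩ := hint
  have h := hK.combo_interior_self_mem_interior hp (hneg p (interior_subset hp)) (a := 1 / 2)
    (b := 1 / 2) (by norm_num) (by norm_num) (by norm_num)
  rwa [smul_neg, add_neg_cancel] at h

lemma exists_seminorm_unitBall_eq (hK : IsCompact K) (hconv : Convex ℝ K)
    (h0 : (0 : E) ∈ interior K) (hneg : ∀ p ∈ K, -p ∈ K) :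
    ∃ N : Seminorm ℝ E, (∀ z ≠ 0, 0 < N z) ∧ (∀ z, N z < 1 ↔ z ∈ interior K) ∧
      ∀ z, N z = 1 ↔ z ∈ frontier K := by
  have hnhds : K ∈ 𝓝 0 := mem_interior_iff_mem_nhds.1 h0
  exact ⟨gaugeSeminorm ((balanced_iff_neg_mem hconv).2 hneg) hconv (absorbent_nhds_zero hnhds),
    fun z hz => (gauge_pos (absorbent_nhds_zero hnhds)
      ((NormedSpace.isVonNBounded_iff ℝ).2 hK.isBounded)).2 hz,
    fun z => gauge_lt_one_iff_mem_interior hconv hnhds,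
    fun z => gauge_eq_one_iff_mem_frontier hconv hnhds⟩

lemma gauge_neg_eq_of_dense (hC : Convex ℝ C) (h0 : C ∈ 𝓝 0) (F : CoordFrame E) {T : Set ℝ}
    (hT : Dense T)
    (hgauge : ∀ t ∈ T, gauge C (-(F.u₂ + t • F.u₃)) = gauge C (F.u₂ + t • F.u₃))
    {u : E} (hu : F.p₁ u = 0) : gauge C (-u) = gauge C u := by
  have := continuous_gauge hC h0
  have hline (t : ℝ) : gauge C (-(F.u₂ + t • F.u₃)) = gauge C (F.u₂ + t • F.u₃) :=
    congrFun (Continuous.ext_on hT (by fun_prop) (by fun_prop) hgauge) t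
  have hne (α β : ℝ) (hα : α ≠ 0) :
      gauge C (-(α • F.u₂ + β • F.u₃)) = gauge C (α • F.u₂ + β • F.u₃) := by
    rw [show α • F.u₂ + β • F.u₃ = α • (F.u₂ + (β / α) • F.u₃) by
      rw [smul_add, smul_smul, mul_div_cancel₀ _ hα]]
    rcases hα.lt_or_gt with hneg | hpos
    · rw [← neg_smul, ← neg_smul_neg α, gauge_smul_of_nonneg (neg_pos.2 hneg).le,
        gauge_smul_of_nonneg (neg_pos.2 hneg).le, hline]
    · rw [← smul_neg, gauge_smul_of_nonneg hpos.le, gauge_smul_of_nonneg hpos.le, hline]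
  have hplane (β : ℝ) := congrFun (Continuous.ext_on (dense_compl_singleton (0 : ℝ))
    (f := fun α => gauge C (-(α • F.u₂ + β • F.u₃)))
    (g := fun α => gauge C (α • F.u₂ + β • F.u₃)) (by fun_prop) (by fun_prop)
    fun α hα => hne α β hα)
  rw [F.expand u, hu, zero_smul, zero_add]
  exact hplane _ _

end Gauges

lemma exists_coordFrame {E : Type*} [NormedAddCommGroup E] [NormedSpace ℝ E]
    (hE : Module.finrank ℝ E = 3) {W : Submodule ℝ E} (hW : Module.finrank ℝ W = 2) {z : E}
    (hz : z ∉ W) : ∃ F : CoordFrame E, F.u₁ = z ∧ ∀ q, F.p₁ q = 0 ↔ q ∈ W := by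
  have : FiniteDimensional ℝ E := .of_finrank_pos (by omega)
  have : FiniteDimensional ℝ W := .of_finrank_pos (by omega)
  let b := Module.finBasisOfFinrankEq ℝ W hW
  have hli : LinearIndependent ℝ (Fin.cons z fun i => (b i : E) : Fin 3 → E) := by
    refine linearIndependent_finCons.2 ⟨b.linearIndependent.map' W.subtype W.ker_subtype,
      fun h => hz (Submodule.span_le.2 ?_ h)⟩
    rintro _ ⟨i, rfl⟩
    exact (b i).2
  let B := basisOfLinearIndependentOfCardEqFinrank hli (by simp [hE])
  let p (i : Fin 3) : E →L[ℝ] ℝ := LinearMap.toContinuousLinearMap (B.coord i)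
  have hp (i j : Fin 3) : p i (B j) = if j = i then 1 else 0 := by
    simp [p, Finsupp.single_apply]
  have hB (i : Fin 2) : B i.succ = b i := by simp [B]
  have h₁ : B 1 ∈ W := by
    rw [show B 1 = b 0 from hB 0]
    exact (b 0).2
  have h₂ : B 2 ∈ W := by
    rw [show B 2 = b 1 from hB 1]
    exact (b 1).2
  have hexpand (q : E) : q = p 0 q • B 0 + p 1 q • B 1 + p 2 q • B 2 := by
    conv_lhs => rw [← B.sum_repr q, Fin.sum_univ_three]
    rfl
  refine ⟨⟨p 0, p 1, p 2, B 0, B 1, B 2, by simp [hp], by simp [hp], by simp [hp], by simp [hp],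
    by simp [hp], by simp [hp], by simp [hp], by simp [hp], by simp [hp], hexpand⟩,
    by simp [B], fun q => ⟨fun hq => ?_, fun hq => ?_⟩⟩
  · rw [hexpand q, show p 0 q = 0 from hq, zero_smul, zero_add]
    exact W.add_mem (W.smul_mem _ h₁) (W.smul_mem _ h₂)
  · by_contra hne
    have hB₀ : p 0 q • B 0 = q - (p 1 q • B 1 + p 2 q • B 2) := by
      linear_combination (norm := module) -hexpand q
    have hmem : p 0 q • B 0 ∈ W :=
      hB₀ ▸ W.sub_mem hq (W.add_mem (W.smul_mem _ h₁) (W.smul_mem _ h₂))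
    exact hz (by simpa [B] using (W.smul_mem_iff hne).1 hmem)

section AlmostFree

open Topology

variable {L : Set E3} {N : Seminorm ℝ E3} {W : Submodule ℝ E3} {P : AffineSubspace ℝ E3}
  {Δ : E3 → AffineSubspace ℝ E3} {a s σ : ℝ} {x z : E3}

lemma add_smul_sub_mem_lineThrough (p q : E3) (s : ℝ) : p + s • (q - p) ∈ lineThrough p q := by
  simpa [lineThrough, AffineMap.lineMap_apply, add_comm] using
    AffineMap.lineMap_mem_affineSpan_pair s p q

lemma notMem_of_disjoint_lineThrough (h0 : (0 : E3) ∈ L) (hz : N z = 1)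
    (hfree : ∀ w ∈ W, N w = 1 → Disjoint (lineThrough z w) L) : z ∉ W := by
  refine fun hzW => disjoint_left.1 (hfree (-z) (W.neg_mem hzW) (by rwa [map_neg_eq_map])) ?_ h0
  convert add_smul_sub_mem_lineThrough z (-z) (1 / 2)
  module

lemma exists_mem_suppCone (hL : Convex ℝ L) (h0 : (0 : E3) ∈ interior L)
    (hpos : ∀ v ≠ 0, 0 < N v) (hz : N z = 1)
    (hfree : ∀ w ∈ W, N w = 1 → Disjoint (lineThrough z w) L) (hW : W ≠ ⊥) :
    ∃ w ∈ W, w ∈ suppCone L z := by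
  obtain ⟨v, hv, hv0⟩ := W.exists_mem_ne_zero_of_ne_bot hW
  have hzW := notMem_of_disjoint_lineThrough (interior_subset h0) hz hfree
  set w := (N v)⁻¹ • v with hw
  have hwW : w ∈ W := W.smul_mem _ hv
  have hNw : N w = 1 := by
    rw [hw, map_smul_eq_mul, Real.norm_of_nonneg (inv_pos.2 (hpos v hv0)).le,
      inv_mul_cancel₀ (hpos v hv0).ne']
  have hwC : w ∉ coneGen L z := by
    rintro ⟨q, hq, l, -, hl⟩
    have hl0 : l ≠ 0 := by
      rintro rfl
      exact hzW (by simpa [hl] using hwW)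
    refine disjoint_left.1 (hfree w hwW hNw) (add_smul_sub_mem_lineThrough z w l⁻¹) ?_
    rwa [hl, add_sub_cancel_left, inv_smul_smul₀ hl0, add_sub_cancel]
  have hC := convex_coneGen hL (x := z)
  have hC0 : coneGen L z ∈ 𝓝 0 :=
    Filter.mem_of_superset (mem_interior_iff_mem_nhds.1 h0) subset_coneGen
  have hgauge : 0 < gauge (coneGen L z) w := one_pos.trans_le <| not_lt.1 fun hlt =>
    hwC (interior_subset ((gauge_lt_one_iff_mem_interior hC hC0).1 hlt))
  refine ⟨(gauge (coneGen L z) w)⁻¹ • w, W.smul_mem _ hwW,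
    (gauge_eq_one_iff_mem_frontier hC hC0).1 ?_⟩
  rw [gauge_smul_of_nonneg (inv_pos.2 hgauge).le, smul_eq_mul, inv_mul_cancel₀ hgauge.ne']

lemma exists_coordFrame_apply_graze_eq (hL : IsCompact L) (hconv : Convex ℝ L)
    (h0 : (0 : E3) ∈ interior L) (hpos : ∀ v ≠ 0, 0 < N v) (hz : N z = 1) (hzL : z ∉ L)
    (hP : IsPlane P) (hgraze : graze L z ⊆ P)
    (hfree : ∀ w ∈ P.direction, N w = 1 → Disjoint (lineThrough z w) L) :
    ∃ F : CoordFrame E3, F.u₁ = z ∧ (∀ q, F.p₁ q = 0 ↔ q ∈ P.direction) ∧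
      ∃ a < 1, ∀ p ∈ graze L z, F.p₁ p = a := by
  have hzW := notMem_of_disjoint_lineThrough (interior_subset h0) hz hfree
  obtain ⟨F, rfl, hF⟩ := exists_coordFrame (by simp) hP hzW
  refine ⟨F, rfl, hF, ?_⟩
  have hne : P.direction ≠ ⊥ := by
    intro h
    rw [IsPlane, h, finrank_bot] at hP
    omega
  obtain ⟨w, hw, hwS⟩ := exists_mem_suppCone hconv h0 hpos hz hfree hne
  obtain ⟨q, hq, l, hl, hwq⟩ :=
    exists_mem_graze_eq_add_smul_sub hL hzL hwS (fun h => hzW (h ▸ hw))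
  refine ⟨F.p₁ q, ?_, fun p hp => ?_⟩
  · have h : 0 = 1 + l * (F.p₁ q - 1) := by
      simpa [(hF w).2 hw] using congrArg F.p₁ hwq
    nlinarith
  · have hdir := (hF _).2 (P.vsub_mem_direction (hgraze hp) (hgraze hq))
    rwa [vsub_eq_sub, map_sub, sub_eq_zero] at hdir

lemma isGrazePlane_of_apply_graze_eq {F : CoordFrame E3} (hL : IsCompact L) (hz : F.u₁ ∉ L)
    (ha : a < 1) (hgraze : ∀ p ∈ graze L F.u₁, F.p₁ p = a) :
    IsGrazePlane L F.u₁ ((1 - a)⁻¹ • F.p₁) (a / (1 - a)) where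
  apply_apex := by
    have : 1 - a ≠ 0 := (sub_pos.2 ha).ne'
    simp only [smul_apply, F.p₁_u₁, smul_eq_mul]
    field_simp
    ring
  apply_eq p hp f hf hle heq := by
    rw [smul_apply, hgraze p (mem_graze_of_apply_eq hL hz hp hf hle heq), smul_eq_mul,
      div_eq_inv_mul]

namespace CoordFrame

variable (F : CoordFrame E3)

lemma abs_add_abs_lt_one_of_disjoint_lineThrough (H : IsGrazed L N)
    (hpos : Disjoint (lineThrough F.u₁ F.u₂) L)
    (hneg : Disjoint (lineThrough F.u₁ (-F.u₂)) L) :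
    ∀ q ∈ F.slice L, |F.p₁ q| + |F.p₂ q| < 1 := by
  have hlt (s : ℝ) (hs : Disjoint (lineThrough F.u₁ (s • F.u₂)) L) :
      s * s = 1 → ∀ q ∈ F.slice L, F.p₁ q + s * F.p₂ q < 1 := by
    intro hss q hq
    by_contra! hge
    set k := (F.p₁ q + s * F.p₂ q)⁻¹
    have hk₀ : 0 ≤ k := inv_nonneg.2 (by linarith)
    have hkq : k • q ∈ F.slice L :=
      (F.convex_slice H.convex).smul_mem_of_zero_mem
        ⟨interior_subset H.zero_mem_interior, map_zero _⟩ hq ⟨hk₀, inv_le_one_of_one_le₀ hge⟩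
    have hkeq : k * (F.p₁ q + s * F.p₂ q) = 1 := inv_mul_cancel₀ (by linarith)
    refine disjoint_left.1 hs (add_smul_sub_mem_lineThrough _ _ (k * s * F.p₂ q)) ?_
    convert hkq.1 using 1
    have hexpand := F.expand q
    rw [hq.2] at hexpand
    linear_combination (norm := module)
      -k • hexpand - hkeq • F.u₁ + (k * F.p₂ q) • hss • F.u₂
  have h₁ := hlt 1 (by simpa using hpos) (by norm_num)
  have h₂ := hlt (-1) (by simpa using hneg) (by norm_num)
  intro q hq
  have h₃ := h₁ (-q) (H.neg_mem_slice F hq)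
  have h₄ := h₂ (-q) (H.neg_mem_slice F hq)
  have h₁ := h₁ q hq
  have h₂ := h₂ q hq
  simp only [map_neg] at h₃ h₄
  cases abs_cases (F.p₁ q) <;> cases abs_cases (F.p₂ q) <;> linarith

lemma inv_tangentSlope_smul_mem_suppCone (H : IsGrazed L N) (hN : N F.u₁ = 1) (hσ : σ * σ = 1)
    (hpos : 0 < σ * F.tangentSlope L N σ) :
    (F.tangentSlope L N σ)⁻¹ • F.u₂ ∈ suppCone L F.u₁ := by
  obtain ⟨q, hq⟩ := H.exists_isTangentPoint F hσ
  have hx : F.u₁ ∉ L := fun h => (H.norm_lt_one _ h).ne hN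
  have hone : F.tangent L N σ F.u₁ = 1 := (F.tangent_u₁ L N σ).trans hN
  obtain ⟨g, hg0, hle, hg⟩ := H.exists_extension F (f := F.tangent L N σ)
    (by rw [hone]; exact one_ne_zero) hq.tangent_le
  have hgx : g F.u₁ = 1 := (hg _ (by simp)).trans hone
  have hgraze : q ∈ graze L F.u₁ := mem_graze_of_apply_eq H.isCompact hx hq.mem.1 hg0
    (fun p hp => (hle p hp).trans_eq hgx.symm)
    ((hg _ hq.mem.2).trans (hq.tangent_eq.trans hgx.symm))
  have htan : F.p₁ q + F.tangentSlope L N σ * F.p₂ q = 1 := by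
    simpa [F.tangent_apply, hN] using hq.tangent_eq
  have hprod : 0 < F.tangentSlope L N σ * F.p₂ q := by
    have h := mul_pos hpos hq.pos
    rwa [mul_mul_mul_comm, hσ, one_mul] at h
  have hne : F.tangentSlope L N σ ≠ 0 := left_ne_zero_of_mul hprod.ne'
  have hne' : F.p₂ q ≠ 0 := right_ne_zero_of_mul hprod.ne'
  convert add_smul_sub_mem_suppCone H.isCompact hx (inv_pos.2 hprod) hgraze.1 using 1
  have hexpand : q - F.u₁ = F.p₂ q • (F.u₂ - F.tangentSlope L N σ • F.u₁) := by
    have h := F.expand q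
    rw [hq.mem.2] at h
    linear_combination (norm := module) h + htan • F.u₁
  rw [hexpand]
  match_scalars <;> field_simp
  ring

end CoordFrame

open Pointwise in
lemma CoordFrame.ae_hasSqrtChord_smul_dualSection {E : Type*} [NormedAddCommGroup E]
    [NormedSpace ℝ E] (F : CoordFrame E) {L : Set E} (h0 : (0 : E) ∈ interior L) :
    ∀ᵐ t : ℝ, ∀ σ : ℝ, σ * σ = 1 → HasSqrtChord (σ • F.dualSection L) t := by
  have h (σ : ℝ) : ∀ᵐ t : ℝ, HasSqrtChord (σ • F.dualSection L) t :=
    ae_hasSqrtChord ((F.isCompact_dualSection h0).smul σ) (F.convex_dualSection.smul σ)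
  filter_upwards [h 1, h (-1)] with t hpos hneg σ hσ
  rcases mul_self_eq_one_iff.1 hσ with rfl | rfl
  exacts [hpos, hneg]

lemma coneGen_mem_nhds_zero (h0 : (0 : E3) ∈ interior L) : coneGen L x ∈ 𝓝 0 :=
  Filter.mem_of_superset (mem_interior_iff_mem_nhds.1 h0) subset_coneGen

lemma mem_suppCone_iff_gauge_eq_one (hL : Convex ℝ L) (h0 : (0 : E3) ∈ interior L) :
    z ∈ suppCone L x ↔ gauge (coneGen L x) z = 1 :=
  (gauge_eq_one_iff_mem_frontier (convex_coneGen hL) (coneGen_mem_nhds_zero h0)).symm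

lemma gauge_coneGen_neg_u₂ (H : IsGrazed L N) (F : CoordFrame E3) (hN : N F.u₁ = 1)
    (hpos : 0 < F.tangentSlope L N 1)
    (hsum : F.tangentSlope L N 1 + F.tangentSlope L N (-1) = 0) :
    gauge (coneGen L F.u₁) (-F.u₂) = gauge (coneGen L F.u₁) F.u₂ := by
  have heq : F.tangentSlope L N (-1) = -F.tangentSlope L N 1 := by linarith
  have h₁ := F.inv_tangentSlope_smul_mem_suppCone H hN (one_mul 1) (by rwa [one_mul])
  have h₂ := F.inv_tangentSlope_smul_mem_suppCone H hN (σ := -1) (by norm_num)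
    (by rwa [heq, neg_mul_neg, one_mul])
  rw [mem_suppCone_iff_gauge_eq_one H.convex H.zero_mem_interior] at h₁ h₂
  rw [heq, inv_neg, neg_smul, ← smul_neg] at h₂
  rw [gauge_smul_of_nonneg (inv_pos.2 hpos).le, smul_eq_mul] at h₁ h₂
  exact mul_left_cancel₀ (inv_pos.2 hpos).ne' (h₂.trans h₁.symm)

lemma gauge_coneGen_neg (H : IsGrazed L N) (F : CoordFrame E3) (hN : N F.u₁ = 1) (ha : a < 1)
    (hgraze : ∀ p ∈ graze L F.u₁, F.p₁ p = a)
    (hfree : ∀ w, F.p₁ w = 0 → N w = 1 → Disjoint (lineThrough F.u₁ w) L) {u : E3}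
    (hu : F.p₁ u = 0) : gauge (coneGen L F.u₁) (-u) = gauge (coneGen L F.u₁) u := by
  have hx : F.u₁ ∉ L := fun h => (H.norm_lt_one _ h).ne hN
  refine gauge_neg_eq_of_dense (convex_coneGen H.convex)
    (coneGen_mem_nhds_zero H.zero_mem_interior) F
    (MeasureTheory.Measure.dense_of_ae (F.ae_hasSqrtChord_smul_dualSection H.zero_mem_interior))
    (fun t ht => ?_) hu
  set κ := N (F.u₂ + t • F.u₃) with hκ
  have hpos : 0 < κ := H.norm_pos _ fun h => by simpa using congrArg F.p₂ h
  set F' := F.shear t hpos.ne'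
  have hu₂ : F'.u₂ = κ⁻¹ • (F.u₂ + t • F.u₃) := rfl
  have hNu₂ : N F'.u₂ = 1 := by
    rw [hu₂, map_smul_eq_mul, Real.norm_of_nonneg (inv_pos.2 hpos).le, ← hκ,
      inv_mul_cancel₀ hpos.ne']
  have hlt := F'.abs_add_abs_lt_one_of_disjoint_lineThrough H (hfree _ F'.p₁_u₂ hNu₂)
    (hfree (-F'.u₂) ((map_neg F'.p₁ _).trans (by simp)) (by rwa [map_neg_eq_map]))
  have hsum : F'.tangentSlope L N 1 + F'.tangentSlope L N (-1) = 0 :=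
    F.tangentSlope_shear_add_eq_zero H hN hpos hκ.symm
      (isGrazePlane_of_apply_graze_eq H.isCompact hx ha hgraze) (by simp) (by simp) hlt ht
  have hslope := F'.mem_Ioo_tangentSlope_of_abs_add_lt H hN hlt abs_one
  have hsymm := gauge_coneGen_neg_u₂ H F' hN (one_pos.trans hslope.2) hsum
  rw [hu₂, ← smul_neg, gauge_smul_of_nonneg (inv_pos.2 hpos).le,
    gauge_smul_of_nonneg (inv_pos.2 hpos).le] at hsymm
  exact smul_right_injective ℝ (inv_pos.2 hpos).ne' hsymm

lemma gauge_coneGen_sub_smul (hL : IsCompact L) (hconv : Convex ℝ L)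
    (h0 : (0 : E3) ∈ interior L) (hx : x ∉ L) (hz : z ∈ suppCone L x) (hs : s < 1) :
    gauge (coneGen L x) (z - s • x) = 1 - s := by
  have hpos : 0 < 1 - s := sub_pos.2 hs
  have hmem := (mem_suppCone_iff_gauge_eq_one hconv h0).1
    (add_smul_sub_mem_suppCone hL hx (inv_pos.2 hpos) hz)
  have heq : z - s • x = (1 - s) • (x + (1 - s)⁻¹ • (z - x)) := by
    rw [smul_add, smul_inv_smul₀ hpos.ne']
    module
  rw [heq, gauge_smul_of_nonneg hpos.le, hmem, smul_eq_mul, mul_one]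

lemma neg_notMem_suppCone (hL : IsCompact L) (h0 : (0 : E3) ∈ interior L) (hx : x ∉ L) :
    -x ∉ suppCone L x := by
  refine fun hmem => ((mem_suppCone_iff hL hx).1 hmem).2 ?_
  convert add_smul_sub_mem_interior_coneGen two_pos (interior_mono subset_coneGen h0) using 1
  module

lemma suppCone_inter_suppCone_neg_eq_image (hL : IsCompact L) (hconv : Convex ℝ L)
    (h0 : (0 : E3) ∈ interior L) (hneg : ∀ q ∈ L, -q ∈ L) (hx : x ∉ L) {f : E3 →L[ℝ] ℝ}
    (hfx : f x = 1) (ha : a < 1) (hgraze : ∀ p ∈ graze L x, f p = a)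
    (hsymm : ∀ u, f u = 0 → gauge (coneGen L x) (-u) = gauge (coneGen L x) u) :
    suppCone L x ∩ suppCone L (-x) = (fun p => x + (1 - a)⁻¹ • (p - x)) '' graze L x := by
  have ha' : 0 < 1 - a := sub_pos.2 ha
  have hlt {z : E3} (hz : z ∈ suppCone L x) (hne : z ≠ x) : f z < 1 := by
    obtain ⟨q, hq, l, hl, rfl⟩ := exists_mem_graze_eq_add_smul_sub hL hx hz hne
    rw [map_add, map_smul, map_sub, hfx, hgraze q hq, smul_eq_mul]
    nlinarith
  apply Subset.antisymm
  · rintro z ⟨hz, hz'⟩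
    rw [mem_suppCone_neg_iff hneg] at hz'
    have hne : z ≠ x := by
      rintro rfl
      exact neg_notMem_suppCone hL h0 hx hz'
    have hne' : -z ≠ x := by
      rintro rfl
      exact neg_notMem_suppCone hL h0 hx (by rwa [neg_neg])
    have hgauge := gauge_coneGen_sub_smul hL hconv h0 hx hz (hlt hz hne)
    have hgauge' := gauge_coneGen_sub_smul hL hconv h0 hx hz' (hlt hz' hne')
    have hfz : f z = 0 := by
      have h := hsymm (z - f z • x) (by simp [hfx])
      rw [hgauge, neg_sub', ← neg_smul, ← map_neg, hgauge', map_neg] at h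
      linarith
    obtain ⟨q, hq, l, -, rfl⟩ := exists_mem_graze_eq_add_smul_sub hL hx hz hne
    rw [map_add, map_smul, map_sub, hfx, hgraze q hq, smul_eq_mul] at hfz
    exact ⟨q, hq, by rw [eq_inv_of_mul_eq_one_left (a := l) (b := 1 - a) (by linarith)]⟩
  · rintro _ ⟨q, hq, rfl⟩
    have hmem := add_smul_sub_mem_suppCone hL hx (inv_pos.2 ha') hq.1
    refine ⟨hmem, (mem_suppCone_neg_iff hneg).2 ?_⟩
    rw [mem_suppCone_iff_gauge_eq_one hconv h0] at hmem ⊢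
    rw [hsymm _ ?_, hmem]
    rw [map_add, map_smul, map_sub, hfx, hgraze q hq, smul_eq_mul]
    field_simp
    ring

lemma isGrazed_of_disjoint_lineThrough (hL : IsCompact L) (hstrict : StrictConvex ℝ L)
    (hneg : ∀ q ∈ L, -q ∈ L) (h0 : (0 : E3) ∈ interior L) (hpos : ∀ v ≠ 0, 0 < N v)
    (hlt : ∀ q ∈ L, N q < 1)
    (hΔ : ∀ z, N z = 1 → IsPlane (Δ z) ∧ graze L z ⊆ (Δ z : Set E3))
    (hfree : ∀ z, N z = 1 → ∀ w ∈ (Δ z).direction, N w = 1 → Disjoint (lineThrough z w) L) :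
    IsGrazed L N where
  isCompact := hL
  strictConvex := hstrict
  neg_mem := hneg
  zero_mem_interior := h0
  norm_pos := hpos
  norm_lt_one := hlt
  exists_isGrazePlane z hz := by
    have hzL : z ∉ L := fun h => (hlt z h).ne hz
    obtain ⟨F, rfl, -, a, ha, hgraze⟩ := exists_coordFrame_apply_graze_eq hL hstrict.convex h0
      hpos hz hzL (hΔ z hz).1 (hΔ z hz).2 (hfree z hz)
    exact ⟨_, _, isGrazePlane_of_apply_graze_eq hL hzL ha hgraze⟩

end AlmostFree

theorem statement4
    (K L : Set E3)
    (hKcomp : IsCompact K) (hKconv : Convex ℝ K) (hKint : (interior K).Nonempty)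
    (hKsym : K = -K)
    (hLcomp : IsCompact L) (hLconv : Convex ℝ L) (hLint : (interior L).Nonempty)
    (hLsym : L = -L) (hLstrict : StrictConvex ℝ L)
    (hLK : L ⊆ interior K)
    (Δ : E3 → AffineSubspace ℝ E3)
    (hΔ : ∀ z ∈ frontier K, IsPlane (Δ z) ∧ graze L z ⊆ (Δ z : Set E3))
    (hAF : AlmostFree K L Δ) :
    ∀ x ∈ frontier K, ∃ l : ℝ, 0 < l ∧
      suppCone L x ∩ suppCone L (-x) =
        (fun p => x + l • (p - x)) '' graze L x := by
  intro x hx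
  have hKneg : ∀ p ∈ K, -p ∈ K := fun p hp => mem_neg.1 (hKsym ▸ hp)
  have hLneg : ∀ p ∈ L, -p ∈ L := fun p hp => mem_neg.1 (hLsym ▸ hp)
  have hK0 := zero_mem_interior_of_neg_mem hKconv hKint hKneg
  have hL0 := zero_mem_interior_of_neg_mem hLconv hLint hLneg
  obtain ⟨N, hpos, hball, hsphere⟩ := exists_seminorm_unitBall_eq hKcomp hKconv hK0 hKneg
  have hfree (z : E3) (hz : N z = 1) (w : E3) (hw : w ∈ (Δ z).direction) (hNw : N w = 1) :
      Disjoint (lineThrough z w) L := hAF z ((hsphere z).1 hz) w ⟨hw, (hsphere w).1 hNw⟩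
  have H : IsGrazed L N := isGrazed_of_disjoint_lineThrough hLcomp hLstrict hLneg hL0 hpos
    (fun q hq => (hball q).2 (hLK hq)) (fun z hz => hΔ z ((hsphere z).1 hz)) hfree
  have hNx : N x = 1 := (hsphere x).2 hx
  have hxL : x ∉ L := fun h => (H.norm_lt_one x h).ne hNx
  obtain ⟨F, rfl, hF, a, ha, hgraze⟩ := exists_coordFrame_apply_graze_eq hLcomp hLconv hL0 hpos
    hNx hxL (hΔ x hx).1 (hΔ x hx).2 (hfree x hNx)
  exact ⟨(1 - a)⁻¹, inv_pos.2 (sub_pos.2 ha), suppCone_inter_suppCone_neg_eq_image hLcomp hLconv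
    hL0 hLneg hxL F.p₁_u₁ ha hgraze fun u hu => gauge_coneGen_neg H F hNx ha hgraze
      (fun w hw => hfree _ hNx w ((hF w).1 hw)) hu⟩

end
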